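/- arXiv:2501.12055 — 2 statements merged into one kernel-verified Lean document; each statement's English description precedes it below -/
import Mathlib

section
/- For n ≥ 2 and a finite set M of n positive integers, there is a bijection χ between k-Stirling permutations on the multiset M_k that begin with the smallest element of M, and increasing pruned even k-ary trees on M, such that ap(π) = lleaf(χ(π)). Moreover π starts with k equal letters if and only if the first k−1 children of the root of χ(π) are leaves. -/
open Polynomial
open scoped Classical

noncomputable section

/-- Number of longest ascent-plateaux of the length-`L` word `v` (values in `ℕ`):
indices `i` with `v i < v (i+1) = v (i+2) = ⋯ = v (i+k)`. -/
def apWord (k L : ℕ) (v : ℕ → ℕ) : ℕ :=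
  ((Finset.range L).filter fun i =>
    i + k < L ∧ v i < v (i + 1) ∧ ∀ j < k, v (i + 1 + j) = v (i + 1)).card

/-- `w : Fin (k*n) → Fin n` is a `k`-Stirling permutation of order `n`: every letter
occurs exactly `k` times and letters lying between two equal letters are at least as
large. -/
def IsKStirling (k n : ℕ) (w : Fin (k * n) → Fin n) : Prop :=
  (∀ m : Fin n, (Finset.univ.filter fun i => w i = m).card = k) ∧
  (∀ i j l : Fin (k * n), i ≤ j → j ≤ l → w i = w l → w i ≤ w j)

/-- The word (with values in `{1,…,n}` and junk value `0` out of range) associated to a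
`k`-Stirling permutation. -/
def wordOf (k n : ℕ) (w : Fin (k * n) → Fin n) : ℕ → ℕ :=
  fun i => if h : i < k * n then (w ⟨i, h⟩ : ℕ) + 1 else 0

/-- The number `ap(π)` of longest ascent-plateaux of a `k`-Stirling permutation. -/
def apStat (k n : ℕ) (w : Fin (k * n) → Fin n) : ℕ :=
  apWord k (k * n) (wordOf k n w)

/-- The number `lap(π)` of left longest ascent-plateaux: longest ascent-plateaux of the
word `0π` obtained by prepending a zero. -/
def lapStat (k n : ℕ) (w : Fin (k * n) → Fin n) : ℕ :=
  apWord k (k * n + 1) (fun i => if i = 0 then 0 else wordOf k n w (i - 1))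

/-!  Increasing pruned even `k`-ary forests on a linearly ordered label set `α` are
encoded by parent functions `f : α → Option (α × Fin k)`: `f x = some (y, s)` means the
labeled node `x` is attached to the `s`-th (unlabeled) child of the labeled node `y`,
and `f x = none` means `x` is the root of a component.  The increasing condition says
that labels of the children of each node increase, so the ordered-tree structure is
determined by `f`; components are ordered by their (increasing) root labels.  -/

/-- The labeled node `u` has a labeled grand child (so it is an internal labeled node
carrying its `k` unlabeled children in the pruned tree). -/
def hasChild {α : Type} {k : ℕ} (f : α → Option (α × Fin k)) (u : α) : Prop :=
  ∃ x s, f x = some (u, s)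

/-- `f` encodes an increasing pruned even `k`-ary forest: parents carry smaller labels. -/
def IsForest {α : Type} [LT α] {k : ℕ} (f : α → Option (α × Fin k)) : Prop :=
  ∀ x y s, f x = some (y, s) → y < x

/-- `f` encodes an increasing pruned even `k`-ary tree: a forest with a unique root. -/
def IsTree {α : Type} [LT α] {k : ℕ} (f : α → Option (α × Fin k)) : Prop :=
  IsForest f ∧ ∃! r, f r = none

/-- `lleaf`: the number of labeled leaves. -/
noncomputable def lleafStat {α : Type} [Fintype α] {k : ℕ}
    (f : α → Option (α × Fin k)) : ℕ :=
  (Finset.univ.filter fun u => ¬ hasChild f u).card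

/-- `si`: the number of singleton components (roots that are leaves). -/
noncomputable def siStat {α : Type} [Fintype α] {k : ℕ}
    (f : α → Option (α × Fin k)) : ℕ :=
  (Finset.univ.filter fun u => f u = none ∧ ¬ hasChild f u).card

/-- A non-root labeled node is old if it carries the greatest label among all the
grand children of its grand parent. -/
def oldNode {α : Type} [LinearOrder α] {k : ℕ}
    (f : α → Option (α × Fin k)) (v : α) : Prop :=
  ∃ y s, f v = some (y, s) ∧ ∀ x : α, (∃ t, f x = some (y, t)) → x ≤ v

/-- A non-root labeled node that is not old is young. -/
def youngNode {α : Type} [LinearOrder α] {k : ℕ}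
    (f : α → Option (α × Fin k)) (v : α) : Prop :=
  (∃ y s, f v = some (y, s)) ∧ ¬ oldNode f v

/-- `oleaf`: the number of old labeled leaves. -/
noncomputable def oleafStat {α : Type} [LinearOrder α] [Fintype α] {k : ℕ}
    (f : α → Option (α × Fin k)) : ℕ :=
  (Finset.univ.filter fun v => oldNode f v ∧ ¬ hasChild f v).card

/-- `oint`: the number of old internal labeled nodes. -/
noncomputable def ointStat {α : Type} [LinearOrder α] [Fintype α] {k : ℕ}
    (f : α → Option (α × Fin k)) : ℕ :=
  (Finset.univ.filter fun v => oldNode f v ∧ hasChild f v).card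

/-- `F` has no young leaves. -/
def NoYoungLeaf {α : Type} [LinearOrder α] {k : ℕ}
    (f : α → Option (α × Fin k)) : Prop :=
  ∀ v : α, ¬ (youngNode f v ∧ ¬ hasChild f v)

/-- The generalized Foata–Strehl transformation `Φ_v`.  If `v` is an old internal node
with grand parent `u`, the subtrees hanging from the `k` children of `v` are transferred
(slotwise) to the corresponding children of `u`, turning `v` into a leaf; if `v` is a
young leaf, all subtrees hanging from the children of `u` whose root labels exceed `v`
are transferred (slotwise) to `k` freshly attached children of `v`; otherwise nothing
happens. -/
noncomputable def phi {α : Type} [LinearOrder α] {k : ℕ} (v : α)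
    (f : α → Option (α × Fin k)) : α → Option (α × Fin k) :=
  match f v with
  | none => f
  | some (u, _) =>
    if ∀ x : α, (∃ t, f x = some (u, t)) → x ≤ v then
      -- `v` is old
      if hasChild f v then
        (fun x => match f x with
          | some (w, j) => if w = v then some (u, j) else some (w, j)
          | none => none)
      else f
    else
      -- `v` is young
      if hasChild f v then f
      else
        (fun x => match f x with
          | some (w, j) => if w = u ∧ v < x then some (v, j) else some (w, j)
          | none => none)

/-- `u` is a removable old leaf of the forest `f`: an old leaf that is a grand child of
the root `r` of its component, the only leaf among the grand children of `r`, the first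
`k-1` children of `r` are leaves, and the label of `u` is smaller than the label of
every later root. -/
def removableOldLeaf {α : Type} [LinearOrder α] {k : ℕ}
    (f : α → Option (α × Fin k)) (u : α) : Prop :=
  oldNode f u ∧ ¬ hasChild f u ∧
  ∃ (r : α) (s : Fin k), f u = some (r, s) ∧ f r = none ∧
    (∀ x : α, (∃ t, f x = some (r, t)) → x ≠ u → hasChild f x) ∧
    (∀ (x : α) (j : Fin k), (j : ℕ) < k - 1 → f x ≠ some (r, j)) ∧
    (∀ r' : α, f r' = none → r < r' → u < r')

/-- `u` is a removable young leaf of the forest `f`: a young leaf that is a grand child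
of the root `r` of the rightmost component such that after applying `Φ_u` the first
`k-1` children of `r` are leaves. -/
noncomputable def removableYoungLeaf {α : Type} [LinearOrder α] {k : ℕ}
    (f : α → Option (α × Fin k)) (u : α) : Prop :=
  youngNode f u ∧ ¬ hasChild f u ∧
  ∃ (r : α) (s : Fin k), f u = some (r, s) ∧ f r = none ∧
    (∀ r' : α, f r' = none → r' ≤ r) ∧
    (∀ (x : α) (j : Fin k), (j : ℕ) < k - 1 → phi u f x ≠ some (r, j))

/-- The forest lies in the class `\overline{𝓕}_n(k)`: the rightmost tree is a singleton
or the first `k-1` children of its root are leaves. -/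
def inBarClass {α : Type} [LinearOrder α] {k : ℕ}
    (f : α → Option (α × Fin k)) : Prop :=
  ∃ r : α, f r = none ∧ (∀ r' : α, f r' = none → r' ≤ r) ∧
    (¬ hasChild f r ∨
      ∀ (x : α) (j : Fin k), (j : ℕ) < k - 1 → f x ≠ some (r, j))

/-- A `k`-Stirling permutation on the multiset `M_k` (each element of the finite set `M`
of positive integers repeated `k` times). -/
def IsKStirlingOn (k : ℕ) (M : Finset ℕ) (w : Fin (k * M.card) → {x // x ∈ M}) : Prop :=
  (∀ m : {x // x ∈ M}, (Finset.univ.filter fun i => w i = m).card = k) ∧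
  (∀ i j l : Fin (k * M.card), i ≤ j → j ≤ l → w i = w l → (w i : ℕ) ≤ (w j : ℕ))

/-- `ap` for a Stirling permutation on `M_k`. -/
def apStatOn (k : ℕ) (M : Finset ℕ) (w : Fin (k * M.card) → {x // x ∈ M}) : ℕ :=
  apWord k (k * M.card) (fun i => if h : i < k * M.card then (w ⟨i, h⟩ : ℕ) + 1 else 0)

/-- insert `k` copies of `m` at position `p`. -/
def insW (k p m : ℕ) (v : ℕ → ℕ) : ℕ → ℕ :=
  fun q => if q < p then v q else if q < p + k then m else v (q - k)

structure SW (k r : ℕ) (S : Finset ℕ) (v : ℕ → ℕ) : Prop where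
  cnt : ∀ a ∈ insert r S, Nat.count (fun i => v i = a) (k * (S.card + 1)) = k
  mem : ∀ i < k * (S.card + 1), v i ∈ insert r S
  out : ∀ i, k * (S.card + 1) ≤ i → v i = 0
  st : ∀ i j l, i ≤ j → j ≤ l → l < k * (S.card + 1) → v i = v l → v i ≤ v j
  ini : v 0 = r

theorem count_congr_lt {p q : ℕ → Prop} [DecidablePred p] [DecidablePred q] {n : ℕ}
    (h : ∀ i < n, p i ↔ q i) : Nat.count p n = Nat.count q n := by
  rw [Nat.count_eq_card_filter_range, Nat.count_eq_card_filter_range]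
  congr 1
  apply Finset.filter_congr
  intro i hi
  exact h i (Finset.mem_range.1 hi)

theorem count_zero_of {p : ℕ → Prop} [DecidablePred p] {n : ℕ}
    (h : ∀ i < n, ¬ p i) : Nat.count p n = 0 := by
  rw [Nat.count_eq_card_filter_range, Finset.card_eq_zero, Finset.filter_eq_empty_iff]
  intro i hi
  exact h i (Finset.mem_range.1 hi)

theorem count_full_of {p : ℕ → Prop} [DecidablePred p] {n : ℕ}
    (h : ∀ i < n, p i) : Nat.count p n = n := by
  rw [Nat.count_eq_card_filter_range, Finset.filter_true_of_mem, Finset.card_range]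
  intro i hi
  exact h i (Finset.mem_range.1 hi)

theorem count_ins_ne {k p m a L : ℕ} {v : ℕ → ℕ} (hp : p ≤ L) (h : a ≠ m) :
    Nat.count (fun i => insW k p m v i = a) (L + k) = Nat.count (fun i => v i = a) L := by
  obtain ⟨t, rfl⟩ := Nat.exists_eq_add_of_le hp
  rw [show p + t + k = p + k + t by omega, Nat.count_add, Nat.count_add, Nat.count_add]
  rw [count_zero_of (p := fun i => insW k p m v (p + i) = a)]
  · congr 1
    · rw [add_zero]
      apply count_congr_lt
      intro i hi
      simp [insW, hi]
    · apply count_congr_lt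
      intro i hi
      have h1 : ¬ (p + k + i < p) := by omega
      have h2 : ¬ (p + k + i < p + k) := by omega
      have h3 : p + k + i - k = p + i := by omega
      simp only [insW, h1, h2, h3, if_false]
  · intro i hi
    have h1 : ¬ (p + i < p) := by omega
    have h2 : (p + i < p + k) := by omega
    simp only [insW, h1, h2, if_false, if_true]
    exact fun h' => h h'.symm

theorem count_ins_eq {k p m L : ℕ} {v : ℕ → ℕ} (hp : p ≤ L) (h : ∀ i < L, v i ≠ m) :
    Nat.count (fun i => insW k p m v i = m) (L + k) = k := by
  obtain ⟨t, rfl⟩ := Nat.exists_eq_add_of_le hp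
  rw [show p + t + k = p + k + t by omega, Nat.count_add, Nat.count_add]
  rw [count_full_of (p := fun i => insW k p m v (p + i) = m), count_zero_of, count_zero_of]
  · omega
  · intro i hi
    have h1 : ¬ (p + k + i < p) := by omega
    have h2 : ¬ (p + k + i < p + k) := by omega
    have h3 : p + k + i - k = p + i := by omega
    simp only [insW, h1, h2, h3, if_false]
    exact h _ (by omega)
  · intro i hi
    simp only [insW, hi, if_true]
    exact h _ (by omega)
  · intro i hi
    have h1 : ¬ (p + i < p) := by omega
    have h2 : (p + i < p + k) := by omega
    simp only [insW, h1, h2, if_false, if_true]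

theorem insW_lo {k p m q : ℕ} {v : ℕ → ℕ} (h : q < p) : insW k p m v q = v q := by
  simp [insW, h]

theorem insW_mid {k p m q : ℕ} {v : ℕ → ℕ} (h : p ≤ q) (h' : q < p + k) :
    insW k p m v q = m := by
  have : ¬ q < p := by omega
  simp [insW, this, h']

theorem insW_hi {k p m q : ℕ} {v : ℕ → ℕ} (h : p + k ≤ q) : insW k p m v q = v (q - k) := by
  have h1 : ¬ q < p := by omega
  have h2 : ¬ q < p + k := by omega
  simp [insW, h1, h2]

theorem insW_shift {k p m q : ℕ} {v : ℕ → ℕ} (h : p ≤ q) : insW k p m v (q + k) = v q := by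
  rw [insW_hi (by omega)]; congr 1; omega

theorem insW_zone {k p m : ℕ} (v : ℕ → ℕ) (q : ℕ) :
    (q < p ∧ insW k p m v q = v q) ∨ (p ≤ q ∧ q < p + k ∧ insW k p m v q = m) ∨
    (p + k ≤ q ∧ insW k p m v q = v (q - k)) := by
  by_cases h : q < p
  · exact Or.inl ⟨h, insW_lo h⟩
  · by_cases h' : q < p + k
    · exact Or.inr (Or.inl ⟨by omega, h', insW_mid (by omega) h'⟩)
    · exact Or.inr (Or.inr ⟨by omega, insW_hi (by omega)⟩)

theorem SW_ins {k r m p : ℕ} {S : Finset ℕ} {v : ℕ → ℕ} (hr : r < m)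
    (hm : ∀ x ∈ S, x < m) (hp1 : 1 ≤ p) (hp : p ≤ k * (S.card + 1))
    (h : SW k r S v) : SW k r (insert m S) (insW k p m v) := by
  have hmS : m ∉ S := fun h => lt_irrefl _ (hm m h)
  have hc : k * ((insert m S).card + 1) = k * (S.card + 1) + k := by
    rw [Finset.card_insert_of_notMem hmS]; ring
  have hlt : ∀ i < k * (S.card + 1), v i < m := by
    intro i hi
    rcases Finset.mem_insert.1 (h.mem i hi) with h1 | h1
    · omega
    · exact hm _ h1
  constructor
  · intro a ha
    rw [hc]
    by_cases ham : a = m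
    · subst ham
      exact count_ins_eq hp (fun i hi => (hlt i hi).ne)
    · rw [count_ins_ne hp ham]
      apply h.cnt
      simp only [Finset.mem_insert] at ha ⊢
      tauto
  · intro i hi
    rw [hc] at hi
    have key : ∀ j < k * (S.card + 1), v j ∈ insert r (insert m S) := by
      intro j hj
      have := h.mem j hj
      simp only [Finset.mem_insert] at this ⊢
      tauto
    rcases insW_zone (k := k) (p := p) (m := m) v i with ⟨h1, h2⟩ | ⟨h1, h3, h2⟩ | ⟨h1, h2⟩
    · rw [h2]; exact key _ (by omega)
    · rw [h2]; simp
    · rw [h2]; exact key _ (by omega)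
  · intro i hi
    rw [hc] at hi
    rw [insW_hi (by omega)]
    exact h.out _ (by omega)
  · intro i j l hij hjl hl he
    rw [hc] at hl
    rcases insW_zone (k := k) (p := p) (m := m) v i with ⟨i1, i2⟩ | ⟨i1, i3, i2⟩ | ⟨i1, i2⟩ <;>
    rcases insW_zone (k := k) (p := p) (m := m) v j with ⟨j1, j2⟩ | ⟨j1, j3, j2⟩ | ⟨j1, j2⟩ <;>
    rcases insW_zone (k := k) (p := p) (m := m) v l with ⟨l1, l2⟩ | ⟨l1, l3, l2⟩ | ⟨l1, l2⟩ <;>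
    rw [i2, l2] at he <;> rw [i2, j2] <;>
    first
    | omega
    | exact (hlt _ (by omega)).le
    | exact h.st _ _ _ (by omega) (by omega) (by omega) he
    | exact absurd he (hlt _ (by omega)).ne
    | exact absurd he (hlt _ (by omega)).ne'
  · rw [insW_lo (by omega)]; exact h.ini

theorem SW_of_ins {k r m p : ℕ} {S : Finset ℕ} {v : ℕ → ℕ} (hr : r < m)
    (hm : ∀ x ∈ S, x < m) (hp1 : 1 ≤ p) (hp : p ≤ k * (S.card + 1))
    (hv : ∀ i < k * (S.card + 1), v i ≠ m)
    (h : SW k r (insert m S) (insW k p m v)) : SW k r S v := by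
  have hmS : m ∉ S := fun h => lt_irrefl _ (hm m h)
  have hc : k * ((insert m S).card + 1) = k * (S.card + 1) + k := by
    rw [Finset.card_insert_of_notMem hmS]; ring
  have hσ : ∀ i, v i = insW k p m v (if i < p then i else i + k) := by
    intro i
    split_ifs with hi
    · rw [insW_lo hi]
    · rw [insW_shift (by omega)]
  obtain ⟨hcnt, hmem, hout, hst, hini⟩ := h
  rw [hc] at hcnt hmem hout hst
  constructor
  · intro a ha
    have ham : a ≠ m := by
      rcases Finset.mem_insert.1 ha with h1 | h1
      · omega
      · exact (hm _ h1).ne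
    rw [← count_ins_ne hp ham]
    apply hcnt
    simp only [Finset.mem_insert] at ha ⊢
    tauto
  · intro i hi
    have h1 := hmem (if i < p then i else i + k) (by split_ifs <;> omega)
    rw [← hσ] at h1
    have := hv i hi
    simp only [Finset.mem_insert] at h1 ⊢
    tauto
  · intro i hi
    rw [← insW_shift (k := k) (p := p) (m := m) (v := v) (q := i) (by omega)]
    exact hout _ (by omega)
  · intro i j l hij hjl hl he
    rw [hσ i, hσ l] at he
    rw [hσ i, hσ j]
    apply hst _ _ _ _ _ _ he <;> split_ifs <;> omega
  · rw [← hini, insW_lo (by omega)]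

theorem SW_surj {k r m : ℕ} {S : Finset ℕ} {u : ℕ → ℕ} (hk : 1 ≤ k) (hr : r < m)
    (hm : ∀ x ∈ S, x < m) (h : SW k r (insert m S) u) :
    ∃ p v, 1 ≤ p ∧ p ≤ k * (S.card + 1) ∧ SW k r S v ∧ insW k p m v = u := by
  have hmS : m ∉ S := fun h => lt_irrefl _ (hm m h)
  have hc : k * ((insert m S).card + 1) = k * (S.card + 1) + k := by
    rw [Finset.card_insert_of_notMem hmS]; ring
  have h' := h
  obtain ⟨hcnt, hmem, hout, hst, hini⟩ := h'
  rw [hc] at hcnt hmem hout hst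
  set L := k * (S.card + 1) with hL
  have hle : ∀ i < L + k, u i ≤ m := by
    intro i hi
    have := hmem i hi
    simp only [Finset.mem_insert] at this
    rcases this with h1 | h1 | h1
    · omega
    · omega
    · exact (hm _ h1).le
  have hex : ∃ i, i < L + k ∧ u i = m := by
    by_contra hcon
    push Not at hcon
    have := hcnt m (by simp)
    rw [count_zero_of (fun i hi => hcon i hi)] at this
    omega
  let p := Nat.find hex
  have hp : p < L + k ∧ u p = m := Nat.find_spec hex
  have hpmin : ∀ i < p, u i ≠ m := by
    intro i hi he
    exact Nat.find_min hex hi ⟨by omega, he⟩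
  have hex2 : ∃ q, p ≤ q ∧ (L + k ≤ q ∨ u q ≠ m) := ⟨L + k, by omega, Or.inl le_rfl⟩
  let q := Nat.find hex2
  have hq : p ≤ q ∧ (L + k ≤ q ∨ u q ≠ m) := Nat.find_spec hex2
  have hqmin : ∀ i < q, p ≤ i → i < L + k ∧ u i = m := by
    intro i hi hpi
    have := Nat.find_min hex2 hi
    push Not at this
    exact this hpi
  have hqL : q ≤ L + k := Nat.find_min' hex2 ⟨by omega, Or.inl le_rfl⟩
  have hqpost : ∀ i, q ≤ i → i < L + k → u i ≠ m := by
    intro i hi hiL he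
    have h1 : u q ≠ m := by
      rcases hq.2 with h1 | h1
      · omega
      · exact h1
    have h2 := hst p q i hq.1 hi hiL (by rw [hp.2, he])
    have h3 := hle q (by omega)
    rw [hp.2] at h2
    omega
  have hcm := hcnt m (by simp)
  obtain ⟨d, hd⟩ := Nat.exists_eq_add_of_le hq.1
  obtain ⟨t, ht⟩ := Nat.exists_eq_add_of_le hqL
  rw [ht, hd, Nat.count_add, Nat.count_add, count_zero_of (fun i hi => hpmin i hi),
    count_full_of (fun i hi => (hqmin _ (by omega) (by omega)).2),
    count_zero_of (fun i hi => hqpost _ (by omega) (by omega))] at hcm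
  have hdk : d = k := by omega
  subst hdk
  have hp0 : p ≠ 0 := by
    intro h0
    have := hp.2
    rw [h0, hini] at this
    omega
  have hins : insW d p m (fun i => if i < p then u i else u (i + d)) = u := by
    funext i
    rcases insW_zone (k := d) (p := p) (m := m)
      (fun i => if i < p then u i else u (i + d)) i with ⟨h1, h2⟩ | ⟨h1, h3, h2⟩ | ⟨h1, h2⟩
    · rw [h2]; simp [h1]
    · rw [h2]; exact (hqmin i (by omega) h1).2.symm
    · rw [h2]
      have h3 : ¬ (i - d < p) := by omega
      have h4 : i - d + d = i := by omega
      simp [h3, h4]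
  refine ⟨p, fun i => if i < p then u i else u (i + d), by omega, by omega, ?_, hins⟩
  apply SW_of_ins hr hm (p := p) (by omega) (by omega) _ (by rw [hins]; exact h)
  intro i hi
  split_ifs with h1
  · exact hpmin i h1
  · exact hqpost _ (by omega) (by omega)

theorem insW_inj {k m p p' L : ℕ} {v v' : ℕ → ℕ} (hk : 1 ≤ k) (hp : p ≤ L) (hp' : p' ≤ L)
    (hv : ∀ i < L, v i ≠ m) (hv' : ∀ i < L, v' i ≠ m)
    (h : insW k p m v = insW k p' m v') : p = p' ∧ v = v' := by
  have hpp : p = p' := by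
    rcases lt_trichotomy p p' with h1 | h1 | h1
    · have := congrFun h p
      rw [insW_mid le_rfl (by omega), insW_lo h1] at this
      exact absurd this.symm (hv' _ (by omega))
    · exact h1
    · have := congrFun h p'
      rw [insW_mid (p := p') le_rfl (by omega), insW_lo h1] at this
      exact absurd this (hv _ (by omega))
  refine ⟨hpp, ?_⟩
  subst hpp
  funext i
  by_cases hi : i < p
  · have := congrFun h i
    rwa [insW_lo hi, insW_lo hi] at this
  · have := congrFun h (i + k)
    rwa [insW_shift (by omega), insW_shift (by omega)] at this

/-- ascent plateau set -/
def AP (k L : ℕ) (v : ℕ → ℕ) : Finset ℕ :=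
  (Finset.range L).filter fun i =>
    i + k < L ∧ v i < v (i + 1) ∧ ∀ j < k, v (i + 1 + j) = v (i + 1)

theorem mem_AP {k L i : ℕ} {v : ℕ → ℕ} : i ∈ AP k L v ↔
    i + k < L ∧ v i < v (i + 1) ∧ ∀ q, i + 1 ≤ q → q ≤ i + k → v q = v (i + 1) := by
  unfold AP
  rw [Finset.mem_filter, Finset.mem_range]
  constructor
  · rintro ⟨h0, h1, h2, h3⟩
    refine ⟨h1, h2, fun q hq hq' => ?_⟩
    have := h3 (q - (i + 1)) (by omega)
    rwa [show i + 1 + (q - (i + 1)) = q by omega] at this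
  · rintro ⟨h1, h2, h3⟩
    exact ⟨by omega, h1, h2, fun j hj => h3 _ (by omega) (by omega)⟩

/-- destroying positions -/
def DD (k L : ℕ) (v : ℕ → ℕ) : Finset ℕ :=
  (AP k L v).biUnion fun i => Finset.Icc (i + 1) (i + k)

theorem mem_DD {k L p : ℕ} {v : ℕ → ℕ} :
    p ∈ DD k L v ↔ ∃ i ∈ AP k L v, i + 1 ≤ p ∧ p ≤ i + k := by
  simp [DD]

theorem AP_sep {k L i i' : ℕ} {v : ℕ → ℕ} (h : i ∈ AP k L v) (h' : i' ∈ AP k L v)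
    (hlt : i < i') : i + k ≤ i' := by
  rw [mem_AP] at h h'
  by_contra hc
  have h1 := h.2.2 i' (by omega) (by omega)
  have h2 := h.2.2 (i' + 1) (by omega) (by omega)
  have := h'.2.1
  omega

theorem card_DD {k L : ℕ} {v : ℕ → ℕ} : (DD k L v).card = k * apWord k L v := by
  unfold DD
  rw [Finset.card_biUnion]
  · simp only [Nat.card_Icc]
    rw [Finset.sum_congr rfl (g := fun _ => k) (fun i _ => by omega)]
    rw [Finset.sum_const, smul_eq_mul, mul_comm]
    rfl
  · intro i hi j hj hij
    change Disjoint (Finset.Icc (i + 1) (i + k)) (Finset.Icc (j + 1) (j + k))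
    rw [Finset.disjoint_left]
    intro a ha hb
    rw [Finset.mem_Icc] at ha hb
    rcases lt_or_gt_of_ne hij with h | h
    · have := AP_sep hi hj h; omega
    · have := AP_sep hj hi h; omega

theorem AP_ins {k L p m : ℕ} {v : ℕ → ℕ} (hk : 1 ≤ k) (hp1 : 1 ≤ p) (hp : p ≤ L)
    (hv : ∀ i < L, v i < m) :
    AP k (L + k) (insW k p m v) = insert (p - 1)
      (((AP k L v).filter fun i => i + k < p) ∪
        ((AP k L v).filter fun i => p ≤ i).image (· + k)) := by
  ext i
  simp only [Finset.mem_insert, Finset.mem_union, Finset.mem_filter, Finset.mem_image]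
  constructor
  · intro h
    rw [mem_AP] at h
    obtain ⟨h1, h2, h3⟩ := h
    by_cases c1 : i + k < p
    · right; left
      refine ⟨?_, c1⟩
      rw [mem_AP]
      rw [insW_lo (by omega), insW_lo (by omega)] at h2
      refine ⟨by omega, h2, fun q hq hq' => ?_⟩
      have := h3 q hq hq'
      rwa [insW_lo (by omega), insW_lo (by omega)] at this
    by_cases c2 : i + 1 = p
    · left; omega
    by_cases c3 : i + 1 < p
    · exfalso
      have := h3 p (by omega) (by omega)
      rw [insW_mid le_rfl (by omega), insW_lo c3] at this
      have := hv (i + 1) (by omega)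
      omega
    by_cases c4 : i < p + k
    · exfalso
      rw [insW_mid (by omega) c4] at h2
      rcases insW_zone (k := k) (p := p) (m := m) v (i + 1) with
        ⟨e1, e2⟩ | ⟨e1, e3, e2⟩ | ⟨e1, e2⟩
      · omega
      · omega
      · have := hv (i + 1 - k) (by omega)
        omega
    · right; right
      refine ⟨i - k, ⟨?_, by omega⟩, by omega⟩
      rw [mem_AP]
      obtain ⟨i, rfl⟩ : ∃ i', i = i' + k := ⟨i - k, by omega⟩
      rw [show i + k - k = i by omega]
      rw [show i + k + 1 = i + 1 + k by omega] at h2 h3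
      rw [insW_shift (by omega), insW_shift (by omega)] at h2
      refine ⟨by omega, h2, fun q hq hq' => ?_⟩
      have := h3 (q + k) (by omega) (by omega)
      rwa [insW_shift (by omega), insW_shift (by omega)] at this
  · rintro (rfl | ⟨h, hi⟩ | ⟨i, ⟨h, hi⟩, rfl⟩)
    · rw [mem_AP]
      rw [show p - 1 + 1 = p by omega]
      refine ⟨by omega, ?_, ?_⟩
      · rw [insW_lo (by omega), insW_mid le_rfl (by omega)]
        exact hv _ (by omega)
      · intro q hq hq'
        rw [insW_mid (by omega) (by omega), insW_mid (by omega) (by omega)]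
    · rw [mem_AP] at h ⊢
      obtain ⟨h1, h2, h3⟩ := h
      refine ⟨by omega, ?_, fun q hq hq' => ?_⟩
      · rwa [insW_lo (by omega), insW_lo (by omega)]
      · rw [insW_lo (by omega), insW_lo (by omega)]; exact h3 q hq hq'
    · rw [mem_AP] at h ⊢
      obtain ⟨h1, h2, h3⟩ := h
      rw [show i + k + 1 = i + 1 + k by omega]
      refine ⟨by omega, ?_, fun q hq hq' => ?_⟩
      · rwa [insW_shift (by omega), insW_shift (by omega)]
      · rw [insW_shift (by omega), insW_hi (by omega)]; exact h3 _ (by omega) (by omega)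

theorem ap_ins {k L p m : ℕ} {v : ℕ → ℕ} (hk : 1 ≤ k) (hp1 : 1 ≤ p) (hp : p ≤ L)
    (hv : ∀ i < L, v i < m) :
    apWord k (L + k) (insW k p m v) = apWord k L v + (if p ∈ DD k L v then 0 else 1) := by
  change (AP k (L + k) (insW k p m v)).card = (AP k L v).card + _
  rw [AP_ins hk hp1 hp hv, Finset.card_insert_of_notMem, Finset.card_union_of_disjoint,
    Finset.card_image_of_injective _ (add_left_injective k)]
  · have e1 := Finset.card_filter_add_card_filter_not (s := AP k L v) (fun i => i + k < p)
    have e2 := Finset.card_filter_add_card_filter_not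
      (s := (AP k L v).filter fun i => ¬ (i + k < p)) (fun i => p ≤ i)
    rw [Finset.filter_filter, Finset.filter_filter] at e2
    have e3 : (AP k L v).filter (fun i => ¬ (i + k < p) ∧ p ≤ i) =
        (AP k L v).filter (fun i => p ≤ i) := by
      apply Finset.filter_congr
      intro i _
      omega
    have e4 : ((AP k L v).filter (fun i => ¬ (i + k < p) ∧ ¬ (p ≤ i))).card =
        if p ∈ DD k L v then 1 else 0 := by
      split_ifs with hD
      · obtain ⟨i, hi, h1, h2⟩ := mem_DD.1 hD
        rw [Finset.card_eq_one]
        refine ⟨i, ?_⟩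
        ext j
        rw [Finset.mem_filter, Finset.mem_singleton]
        constructor
        · rintro ⟨hj, h3, h4⟩
          by_contra hne
          rcases lt_or_gt_of_ne hne with h | h
          · have := AP_sep hj hi h; omega
          · have := AP_sep hi hj h; omega
        · rintro rfl
          exact ⟨hi, by omega, by omega⟩
      · rw [Finset.card_eq_zero, Finset.filter_eq_empty_iff]
        intro i hi hh
        exact hD (mem_DD.2 ⟨i, hi, by omega, by omega⟩)
    rw [e3, e4] at e2
    split_ifs at e2 ⊢ <;> omega
  · rw [Finset.disjoint_left]
    intro a ha hb
    simp only [Finset.mem_filter, Finset.mem_image] at ha hb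
    obtain ⟨b, hb, rfl⟩ := hb
    omega
  · simp only [Finset.mem_union, Finset.mem_filter, Finset.mem_image]
    rintro (⟨_, h⟩ | ⟨b, ⟨_, h⟩, h'⟩) <;> omega

/-- word flag -/
def FW (k r : ℕ) (v : ℕ → ℕ) : Prop := ∀ i < k, v i = r

theorem FW_ins {k p m r : ℕ} {v : ℕ → ℕ} (hr : r < m) :
    FW k r (insW k p m v) ↔ FW k r v ∧ k ≤ p := by
  constructor
  · intro h
    have hkp : k ≤ p := by
      by_contra hc
      have := h p (by omega)
      rw [insW_mid le_rfl (by omega)] at this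
      omega
    refine ⟨fun i hi => ?_, hkp⟩
    have := h i hi
    rwa [insW_lo (by omega)] at this
  · rintro ⟨h, hk⟩ i hi
    rw [insW_lo (by omega)]
    exact h i hi

structure TreeOn (k r : ℕ) (S : Finset ℕ) (f : ℕ → Option (ℕ × ℕ)) : Prop where
  par : ∀ x ∈ S, ∃ y s, f x = some (y, s) ∧ y ∈ insert r S ∧ y < x ∧ s < k
  out : ∀ x, x ∉ S → f x = none

def LF (S : Finset ℕ) (f : ℕ → Option (ℕ × ℕ)) : Finset ℕ :=
  S.filter fun u => ∀ x s, f x ≠ some (u, s)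

def FT (k r : ℕ) (f : ℕ → Option (ℕ × ℕ)) : Prop :=
  ∀ x s, s < k - 1 → f x ≠ some (r, s)

theorem ST_ins {k r m : ℕ} {S : Finset ℕ} {f : ℕ → Option (ℕ × ℕ)} (hr : r < m)
    (hm : ∀ x ∈ S, x < m) {c : ℕ × ℕ} (hc : c ∈ insert r S ×ˢ Finset.range k)
    (h : TreeOn k r S f) : TreeOn k r (insert m S) (Function.update f m (some c)) := by
  rw [Finset.mem_product, Finset.mem_range, Finset.mem_insert] at hc
  constructor
  · intro x hx
    by_cases hxm : x = m
    · subst hxm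
      refine ⟨c.1, c.2, by simp, ?_, ?_, hc.2⟩
      · simp only [Finset.mem_insert]; tauto
      · rcases hc.1 with h1 | h1
        · omega
        · exact hm _ h1
    · rw [Function.update_of_ne hxm]
      obtain ⟨y, s, h1, h2, h3, h4⟩ := h.par x (Finset.mem_of_mem_insert_of_ne hx hxm)
      refine ⟨y, s, h1, ?_, h3, h4⟩
      simp only [Finset.mem_insert] at h2 ⊢; tauto
  · intro x hx
    rw [Finset.mem_insert, not_or] at hx
    rw [Function.update_of_ne hx.1]
    exact h.out x hx.2

theorem ST_surj {k r m : ℕ} {S : Finset ℕ} {g : ℕ → Option (ℕ × ℕ)} (hr : r < m)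
    (hm : ∀ x ∈ S, x < m) (h : TreeOn k r (insert m S) g) :
    ∃ c ∈ insert r S ×ˢ Finset.range k, ∃ f, TreeOn k r S f ∧ Function.update f m (some c) = g := by
  have hmS : m ∉ S := fun h => lt_irrefl _ (hm m h)
  obtain ⟨y, s, h1, h2, h3, h4⟩ := h.par m (by simp)
  refine ⟨(y, s), ?_, Function.update g m none, ?_, ?_⟩
  · rw [Finset.mem_product, Finset.mem_range]
    refine ⟨?_, h4⟩
    simp only [Finset.mem_insert] at h2 ⊢
    rcases h2 with h2 | h2 | h2
    · exact Or.inl h2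
    · omega
    · exact Or.inr h2
  · constructor
    · intro x hx
      have hxm : x ≠ m := (hm x hx).ne
      rw [Function.update_of_ne hxm]
      obtain ⟨y, s, h1, h2, h3, h4⟩ := h.par x (Finset.mem_insert_of_mem hx)
      refine ⟨y, s, h1, ?_, h3, h4⟩
      simp only [Finset.mem_insert] at h2 ⊢
      rcases h2 with h2 | h2 | h2
      · exact Or.inl h2
      · have := hm x hx
        omega
      · exact Or.inr h2
    · intro x hx
      by_cases hxm : x = m
      · subst hxm; simp
      · rw [Function.update_of_ne hxm]
        exact h.out x (by simp [hx, hxm])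
  · rw [Function.update_idem, ← h1, Function.update_eq_self]

theorem ST_inj {m : ℕ} {f f' : ℕ → Option (ℕ × ℕ)} {c c' : ℕ × ℕ}
    (hf : f m = none) (hf' : f' m = none)
    (h : Function.update f m (some c) = Function.update f' m (some c')) : f = f' ∧ c = c' := by
  constructor
  · funext x
    by_cases hx : x = m
    · subst hx; rw [hf, hf']
    · have := congrFun h x
      rwa [Function.update_of_ne hx, Function.update_of_ne hx] at this
  · have := congrFun h m
    simpa using this

theorem FT_ins {k r m : ℕ} {f : ℕ → Option (ℕ × ℕ)} {c : ℕ × ℕ} (hf : f m = none) :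
    FT k r (Function.update f m (some c)) ↔ FT k r f ∧ ¬ (c.1 = r ∧ c.2 < k - 1) := by
  constructor
  · intro h
    refine ⟨fun x s hs he => ?_, fun hh => ?_⟩
    · have hx : x ≠ m := by rintro rfl; rw [hf] at he; cases he
      apply h x s hs
      rwa [Function.update_of_ne hx]
    · apply h m c.2 hh.2
      rw [Function.update_self, ← hh.1]
  · rintro ⟨h, h'⟩ x s hs he
    by_cases hx : x = m
    · subst hx
      rw [Function.update_self] at he
      injection he with he
      rw [he] at h'
      exact h' ⟨rfl, hs⟩
    · rw [Function.update_of_ne hx] at he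
      exact h x s hs he

theorem LF_ins {k r m : ℕ} {S : Finset ℕ} {f : ℕ → Option (ℕ × ℕ)} {c : ℕ × ℕ} (hr : r < m)
    (hm : ∀ x ∈ S, x < m) (hc : c ∈ insert r S ×ˢ Finset.range k) (h : TreeOn k r S f) :
    (LF (insert m S) (Function.update f m (some c))).card =
      (LF S f).card + (if c.1 ∈ LF S f then 0 else 1) := by
  have hmS : m ∉ S := fun h => lt_irrefl _ (hm m h)
  have hf : f m = none := h.out m hmS
  rw [Finset.mem_product, Finset.mem_range, Finset.mem_insert] at hc
  have hcm : c.1 < m := by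
    rcases hc.1 with h1 | h1
    · omega
    · exact hm _ h1
  have key : LF (insert m S) (Function.update f m (some c)) =
      insert m ((LF S f).erase c.1) := by
    ext u
    simp only [LF, Finset.mem_filter, Finset.mem_insert, Finset.mem_erase]
    constructor
    · rintro ⟨h1, h2⟩
      by_cases hu : u = m
      · exact Or.inl hu
      · right
        refine ⟨?_, by tauto, fun x s he => ?_⟩
        · rintro rfl
          exact h2 m c.2 (by simp)
        · have hx : x ≠ m := by rintro rfl; rw [hf] at he; cases he
          apply h2 x s
          rwa [Function.update_of_ne hx]
    · have aux : ∀ u, u ≠ c.1 → (∀ x s, f x ≠ some (u, s)) →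
          ∀ x s, Function.update f m (some c) x ≠ some (u, s) := by
        intro u hu h2 x s he
        by_cases hx : x = m
        · subst hx
          rw [Function.update_self] at he
          injection he with he
          rw [he] at hu
          exact hu rfl
        · rw [Function.update_of_ne hx] at he
          exact h2 x s he
      rintro (rfl | ⟨h1, h2, h3⟩)
      · refine ⟨Or.inl rfl, aux _ (by omega) ?_⟩
        intro x s he
        by_cases hx : x ∈ S
        · obtain ⟨y, s', h1, h2, h3, h4⟩ := h.par x hx
          rw [h1] at he
          injection he with he
          injection he with he
          have := hm x hx
          omega
        · rw [h.out x hx] at he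
          cases he
      · exact ⟨Or.inr h2, aux _ h1 h3⟩
  rw [key, Finset.card_insert_of_notMem]
  · split_ifs with hc1
    · rw [Finset.card_erase_of_mem hc1]
      have := Finset.card_pos.2 ⟨_, hc1⟩
      omega
    · rw [Finset.erase_eq_of_notMem hc1]
  · simp [LF, hmS]

theorem colored_equiv {α β γ : Type} [Fintype α] [Fintype β] (a : α → γ) (b : β → γ)
    (h : ∀ c, (Finset.univ.filter fun x => a x = c).card =
      (Finset.univ.filter fun x => b x = c).card) :
    ∃ e : α ≃ β, ∀ x, b (e x) = a x := by
  have h' : ∀ c, Nonempty ({x // a x = c} ≃ {x // b x = c}) := by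
    intro c
    rw [← Fintype.card_eq, Fintype.card_subtype, Fintype.card_subtype]
    exact h c
  have g := fun c => (h' c).some
  refine ⟨(Equiv.sigmaFiberEquiv a).symm.trans ((Equiv.sigmaCongrRight g).trans
    (Equiv.sigmaFiberEquiv b)), fun x => ?_⟩
  simp only [Equiv.trans_apply, Equiv.sigmaFiberEquiv, Equiv.coe_fn_mk, Equiv.coe_fn_symm_mk,
    Equiv.sigmaCongrRight_apply, Sigma.map]
  exact (g (a x) ⟨x, rfl⟩).2

theorem two_color {α β : Type} (A A1 A2 : Finset α) (B B1 B2 : Finset β)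
    (hA1 : A1 ⊆ A) (hA2 : A2 ⊆ A) (hB1 : B1 ⊆ B) (hB2 : B2 ⊆ B)
    (dA : Disjoint A1 A2) (dB : Disjoint B1 B2)
    (h : A.card = B.card) (h1 : A1.card = B1.card) (h2 : A2.card = B2.card) :
    ∃ e : {x // x ∈ A} ≃ {x // x ∈ B}, ∀ x,
      ((e x).1 ∈ B1 ↔ x.1 ∈ A1) ∧ ((e x).1 ∈ B2 ↔ x.1 ∈ A2) := by
  have key : ∀ {δ : Type} (C C1 C2 : Finset δ) (_ : C1 ⊆ C) (_ : C2 ⊆ C) (_ : Disjoint C1 C2)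
      (c : Prop × Prop),
      ((Finset.univ : Finset {x // x ∈ C}).filter fun x => (x.1 ∈ C1, x.1 ∈ C2) = c).card =
      if c.1 then (if c.2 then 0 else C1.card) else
        (if c.2 then C2.card else C.card - (C1.card + C2.card)) := by
    intro δ C C1 C2 hC1 hC2 d c
    rw [← Finset.card_map (Function.Embedding.subtype _)]
    have e : ((Finset.univ : Finset {x // x ∈ C}).filter
        fun x => (x.1 ∈ C1, x.1 ∈ C2) = c).map (Function.Embedding.subtype _) =
        C.filter fun x => (x ∈ C1 ↔ c.1) ∧ (x ∈ C2 ↔ c.2) := by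
      ext x
      simp only [Finset.mem_map, Finset.mem_filter, Finset.mem_univ, true_and,
        Function.Embedding.coe_subtype, Subtype.exists, exists_and_right, exists_eq_right,
        Prod.ext_iff, eq_iff_iff]
      constructor
      · rintro ⟨⟨a, b⟩, c⟩
        exact ⟨a, b, c⟩
      · rintro ⟨a, b, c⟩
        exact ⟨⟨a, b⟩, c⟩
    rw [e]
    have dd := Finset.disjoint_left.1 d
    split_ifs with p1 p2 p2
    · rw [Finset.card_eq_zero, Finset.filter_eq_empty_iff]
      intro x _ hx
      exact dd (hx.1.2 p1) (hx.2.2 p2)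
    · congr 1
      ext x
      have := @hC1 x
      have := @dd x
      rw [Finset.mem_filter]
      tauto
    · congr 1
      ext x
      have := @hC2 x
      have := @dd x
      rw [Finset.mem_filter]
      tauto
    · rw [← Finset.card_union_of_disjoint d, ← Finset.card_sdiff_of_subset
        (Finset.union_subset hC1 hC2)]
      congr 1
      ext x
      rw [Finset.mem_filter, Finset.mem_sdiff, Finset.mem_union]
      tauto
  obtain ⟨e, he⟩ := colored_equiv (fun x : {x // x ∈ A} => (x.1 ∈ A1, x.1 ∈ A2))
    (fun x : {x // x ∈ B} => (x.1 ∈ B1, x.1 ∈ B2)) (by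
      intro c
      have k1 := key A A1 A2 hA1 hA2 dA c
      have k2 := key B B1 B2 hB1 hB2 dB c
      rw [h, h1, h2, ← k2] at k1
      convert k1)
  refine ⟨e, fun x => ?_⟩
  have := he x
  simp only [Prod.mk.injEq, eq_iff_iff] at this
  exact this

theorem step_match {k r : ℕ} {S : Finset ℕ} {v : ℕ → ℕ} {f : ℕ → Option (ℕ × ℕ)} (hk : 1 ≤ k)
    (hr : ∀ x ∈ S, r < x)
    (h1 : apWord k (k * (S.card + 1)) v = (LF S f).card) :
    ∃ e : {p // p ∈ Finset.Icc 1 (k * (S.card + 1))} ≃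
        {c // c ∈ insert r S ×ˢ Finset.range k}, ∀ p,
      ((e p).1.1 ∈ LF S f ↔ p.1 ∈ DD k (k * (S.card + 1)) v) ∧
      (FW k r v → (((e p).1.1 = r ∧ (e p).1.2 < k - 1) ↔ p.1 < k)) := by
  have hrS : r ∉ S := fun h => lt_irrefl _ (hr r h)
  have hLF : LF S f ⊆ S := Finset.filter_subset _ _
  have hkL : k ≤ k * (S.card + 1) := Nat.le_mul_of_pos_right _ (by omega)
  have hDD : DD k (k * (S.card + 1)) v ⊆ Finset.Icc 1 (k * (S.card + 1)) := by
    intro p hp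
    obtain ⟨i, hi, h2, h3⟩ := mem_DD.1 hp
    have := (mem_AP.1 hi).1
    rw [Finset.mem_Icc]
    omega
  have hB1 : LF S f ×ˢ Finset.range k ⊆ insert r S ×ˢ Finset.range k :=
    Finset.product_subset_product (hLF.trans (Finset.subset_insert _ _)) le_rfl
  have hcard : (Finset.Icc 1 (k * (S.card + 1))).card =
      (insert r S ×ˢ Finset.range k).card := by
    rw [Nat.card_Icc, Finset.card_product, Finset.card_range,
      Finset.card_insert_of_notMem hrS, mul_comm]
    rfl
  have hcard1 : (DD k (k * (S.card + 1)) v).card = (LF S f ×ˢ Finset.range k).card := by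
    rw [card_DD, h1, Finset.card_product, Finset.card_range, mul_comm]
  have hmem1 : ∀ c ∈ insert r S ×ˢ Finset.range k, (c ∈ LF S f ×ˢ Finset.range k ↔ c.1 ∈ LF S f) := by
    intro c hc
    rw [Finset.mem_product] at hc ⊢
    exact ⟨fun h => h.1, fun h => ⟨h, hc.2⟩⟩
  by_cases hF : FW k r v
  · obtain ⟨e, he⟩ := two_color (Finset.Icc 1 (k * (S.card + 1))) (DD k (k * (S.card + 1)) v)
      (Finset.Ico 1 k) (insert r S ×ˢ Finset.range k) (LF S f ×ˢ Finset.range k)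
      ({r} ×ˢ Finset.range (k - 1)) hDD
      (by intro p hp; rw [Finset.mem_Ico] at hp; rw [Finset.mem_Icc]; omega) hB1
      (by
        apply Finset.product_subset_product
        · simp
        · intro i hi
          rw [Finset.mem_range] at hi ⊢
          omega)
      (by
        rw [Finset.disjoint_left]
        intro p hp hp'
        rw [Finset.mem_Ico] at hp'
        obtain ⟨i, hi, h2, h3⟩ := mem_DD.1 hp
        have h4 := (mem_AP.1 hi).2.1
        rw [hF i (by omega), hF (i + 1) (by omega)] at h4
        omega)
      (by
        rw [Finset.disjoint_left]
        intro c hc hc'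
        rw [Finset.mem_product] at hc hc'
        have := hLF hc.1
        rw [Finset.mem_singleton.1 hc'.1] at this
        exact hrS this)
      hcard hcard1 (by simp)
    refine ⟨e, fun p => ⟨?_, fun _ => ?_⟩⟩
    · rw [← (he p).1, hmem1 _ (e p).2]
    · have := (he p).2
      have hp := Finset.mem_Icc.1 p.2
      rw [Finset.mem_product, Finset.mem_singleton, Finset.mem_range, Finset.mem_Ico] at this
      rw [this]
      omega
  · obtain ⟨e, he⟩ := two_color (Finset.Icc 1 (k * (S.card + 1))) (DD k (k * (S.card + 1)) v)
      ∅ (insert r S ×ˢ Finset.range k) (LF S f ×ˢ Finset.range k)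
      ∅ hDD (by simp) hB1 (by simp) (by simp) (by simp) hcard hcard1 rfl
    refine ⟨e, fun p => ⟨?_, fun h => absurd h hF⟩⟩
    rw [← (he p).1, hmem1 _ (e p).2]

theorem main_ind (k r : ℕ) (hk : 1 ≤ k) (S : Finset ℕ) : (∀ x ∈ S, r < x) →
    ∃ e : {v // SW k r S v} ≃ {f // TreeOn k r S f}, ∀ v,
      apWord k (k * (S.card + 1)) v.1 = (LF S (e v).1).card ∧
      (FW k r v.1 ↔ FT k r (e v).1) := by
  induction S using Finset.induction_on_max with
  | empty =>
    intro _
    have hW : ∀ v, SW k r ∅ v ↔ v = fun i => if i < k then r else 0 := by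
      intro v
      constructor
      · rintro ⟨hcnt, hmem, hout, hst, hini⟩
        simp only [Finset.card_empty, zero_add, mul_one] at *
        funext i
        split_ifs with hi
        · simpa using hmem i hi
        · exact hout i (by omega)
      · rintro rfl
        constructor
        · intro a ha
          have : a = r := by simpa using ha
          subst this
          simp only [Finset.card_empty, zero_add, mul_one]
          apply count_full_of
          intro i hi
          simp [hi]
        · intro i hi
          simp only [Finset.card_empty, zero_add, mul_one] at hi
          simp [hi]
        · intro i hi
          simp only [Finset.card_empty, zero_add, mul_one] at hi
          simp [hi]
        · intro i j l hij hjl hl he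
          simp only [Finset.card_empty, zero_add, mul_one] at hl
          have h1 : i < k := by omega
          have h2 : j < k := by omega
          simp [h1, h2]
        · simp; omega
    have hT : ∀ f, TreeOn k r ∅ f ↔ f = fun _ => none := by
      intro f
      constructor
      · intro h
        funext x
        exact h.out x (by simp)
      · rintro rfl
        constructor <;> simp
    let v0 : {v // SW k r ∅ v} := ⟨_, (hW _).2 rfl⟩
    let f0 : {f // TreeOn k r ∅ f} := ⟨_, (hT _).2 rfl⟩
    have hv : ∀ v, v = v0 := fun v => Subtype.ext ((hW v.1).1 v.2)
    have hf : ∀ f, f = f0 := fun f => Subtype.ext ((hT f.1).1 f.2)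
    refine ⟨⟨fun _ => f0, fun _ => v0, fun v => (hv v).symm, fun f => (hf f).symm⟩, ?_⟩
    intro v
    rw [hv v]
    constructor
    · simp [apWord, LF]
    · simp only [Equiv.coe_fn_mk]
      constructor
      · intro _ x s _
        simp [f0]
      · intro _ i hi
        simp [v0, hi]
  | insert m S hm ih =>
    intro hr
    have hrm : r < m := hr m (by simp)
    have hrS : ∀ x ∈ S, r < x := fun x hx => hr x (Finset.mem_insert_of_mem hx)
    have hmS : m ∉ S := fun h => lt_irrefl _ (hm m h)
    have hc : k * ((insert m S).card + 1) = k * (S.card + 1) + k := by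
      rw [Finset.card_insert_of_notMem hmS]; ring
    obtain ⟨e, he⟩ := ih hrS
    choose φ hφ using fun v : {v // SW k r S v} => step_match hk hrS (he v).1
    have hlt : ∀ v : {v // SW k r S v}, ∀ i < k * (S.card + 1), v.1 i < m := by
      intro v i hi
      rcases Finset.mem_insert.1 (v.2.mem i hi) with h1 | h1
      · omega
      · exact hm _ h1
    let IW : {v // SW k r S v} × {p // p ∈ Finset.Icc 1 (k * (S.card + 1))} →
        {v // SW k r (insert m S) v} := fun x =>
      ⟨insW k x.2.1 m x.1.1, SW_ins hrm hm (Finset.mem_Icc.1 x.2.2).1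
        (Finset.mem_Icc.1 x.2.2).2 x.1.2⟩
    have hIW : Function.Bijective IW := by
      constructor
      · rintro ⟨⟨v, hv⟩, ⟨p, hp⟩⟩ ⟨⟨v', hv'⟩, ⟨p', hp'⟩⟩ h
        have h' : insW k p m v = insW k p' m v' := congrArg Subtype.val h
        obtain ⟨rfl, rfl⟩ := insW_inj hk (Finset.mem_Icc.1 hp).2 (Finset.mem_Icc.1 hp').2
          (fun i hi => (hlt ⟨v, hv⟩ i hi).ne) (fun i hi => (hlt ⟨v', hv'⟩ i hi).ne) h'
        rfl
      · rintro ⟨u, hu⟩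
        obtain ⟨p, v, h1, h2, h3, h4⟩ := SW_surj hk hrm hm hu
        exact ⟨⟨⟨v, h3⟩, ⟨p, Finset.mem_Icc.2 ⟨h1, h2⟩⟩⟩, Subtype.ext h4⟩
    let IT : {f // TreeOn k r S f} × {c // c ∈ insert r S ×ˢ Finset.range k} →
        {f // TreeOn k r (insert m S) f} := fun x =>
      ⟨Function.update x.1.1 m (some x.2.1), ST_ins hrm hm x.2.2 x.1.2⟩
    have hIT : Function.Bijective IT := by
      constructor
      · rintro ⟨⟨f, hf⟩, ⟨c, hc⟩⟩ ⟨⟨f', hf'⟩, ⟨c', hc'⟩⟩ h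
        have h' : Function.update f m (some c) = Function.update f' m (some c') :=
          congrArg Subtype.val h
        obtain ⟨rfl, rfl⟩ := ST_inj (hf.out m hmS) (hf'.out m hmS) h'
        rfl
      · rintro ⟨g, hg⟩
        obtain ⟨c, hc, f, h1, h2⟩ := ST_surj hrm hm hg
        exact ⟨⟨⟨f, h1⟩, ⟨c, hc⟩⟩, Subtype.ext h2⟩
    let mid : {v // SW k r S v} × {p // p ∈ Finset.Icc 1 (k * (S.card + 1))} ≃
        {f // TreeOn k r S f} × {c // c ∈ insert r S ×ˢ Finset.range k} :=
      (Equiv.prodShear e φ)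
    let E := ((Equiv.ofBijective IW hIW).symm.trans mid).trans (Equiv.ofBijective IT hIT)
    refine ⟨E, ?_⟩
    intro u
    obtain ⟨⟨v, p⟩, rfl⟩ := hIW.2 u
    have hE : E (IW (v, p)) = IT (e v, φ v p) := by
      have : (Equiv.ofBijective IW hIW).symm (IW (v, p)) = (v, p) :=
        (Equiv.ofBijective IW hIW).symm_apply_apply (v, p)
      simp only [E, Equiv.trans_apply, this]
      rfl
    rw [hE]
    have hp := Finset.mem_Icc.1 p.2
    obtain ⟨a1, a2⟩ := he v
    obtain ⟨b1, b2⟩ := hφ v p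
    constructor
    · rw [hc]
      change apWord k _ (insW k p.1 m v.1) =
        (LF (insert m S) (Function.update (e v).1 m (some (φ v p).1))).card
      rw [ap_ins hk hp.1 hp.2 (hlt v), LF_ins hrm hm (φ v p).2 (e v).2, a1]
      congr 1
      simp only [b1]
    · change FW k r (insW k p.1 m v.1) ↔
        FT k r (Function.update (e v).1 m (some (φ v p).1))
      rw [FW_ins hrm, FT_ins ((e v).2.out m hmS), ← a2]
      constructor
      · rintro ⟨h1, h2⟩
        refine ⟨h1, ?_⟩
        rw [b2 h1]
        omega
      · rintro ⟨h1, h2⟩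
        rw [b2 h1] at h2
        exact ⟨h1, by omega⟩

theorem count_fin {N : ℕ} (P : ℕ → Prop) [DecidablePred P] (q : Fin N → Prop) [DecidablePred q]
    (h : ∀ i : Fin N, P i ↔ q i) :
    Nat.count P N = (Finset.univ.filter q).card := by
  rw [Nat.count_eq_card_filter_range, ← Finset.card_map Fin.valEmbedding]
  congr 1
  ext i
  simp only [Finset.mem_filter, Finset.mem_range, Finset.mem_map, Finset.mem_univ, true_and,
    Fin.valEmbedding_apply]
  constructor
  · rintro ⟨h1, h2⟩
    exact ⟨⟨i, h1⟩, (h _).1 h2, rfl⟩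
  · rintro ⟨j, h1, rfl⟩
    exact ⟨j.2, (h _).2 h1⟩

/-- extend a word by zero -/
def extW {k : ℕ} {M : Finset ℕ} (w : Fin (k * M.card) → {x // x ∈ M}) : ℕ → ℕ :=
  fun i => if h : i < k * M.card then (w ⟨i, h⟩ : ℕ) else 0

theorem extW_lt {k : ℕ} {M : Finset ℕ} (w : Fin (k * M.card) → {x // x ∈ M}) {i : ℕ}
    (h : i < k * M.card) : extW w i = (w ⟨i, h⟩ : ℕ) := by
  simp [extW, h]

theorem extW_SW {k r : ℕ} {M S : Finset ℕ} (hk : 1 ≤ k) (hins : insert r S = M)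
    (hcard : S.card + 1 = M.card) (hmin : ∀ x ∈ M, r ≤ x)
    (w : Fin (k * M.card) → {x // x ∈ M}) :
    SW k r S (extW w) ↔ (IsKStirlingOn k M w ∧
          ∀ h0 : 0 < k * M.card, ∀ x ∈ M, ((w ⟨0, h0⟩ : ℕ)) ≤ x) := by
  have hrM : r ∈ M := by rw [← hins]; simp
  have hpos : 0 < k * M.card := Nat.mul_pos hk (by omega)
  have hcnt : ∀ a (ha : a ∈ M), Nat.count (fun i => extW w i = a) (k * M.card) =
      (Finset.univ.filter fun i => w i = ⟨a, ha⟩).card := by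
    intro a ha
    apply count_fin
    intro i
    rw [extW_lt w i.2, Subtype.ext_iff]
  constructor
  · rintro ⟨h1, h2, h3, h4, h5⟩
    rw [hcard] at h1 h2 h3 h4
    refine ⟨⟨fun m => ?_, fun i j l hij hjl he => ?_⟩, fun h0 x hx => ?_⟩
    · exact (hcnt m.1 m.2).symm.trans (h1 m.1 (by rw [hins]; exact m.2))
    · have := h4 i j l hij hjl l.2
      rw [extW_lt w i.2, extW_lt w j.2, extW_lt w l.2] at this
      exact this (congrArg Subtype.val he)
    · rw [extW_lt w h0] at h5
      rw [h5]
      exact hmin x hx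
  · rintro ⟨⟨h1, h2⟩, h3⟩
    constructor
    · intro a ha
      rw [hins] at ha
      rw [hcard, hcnt a ha]
      exact h1 _
    · intro i hi
      rw [hcard] at hi
      rw [extW_lt w hi, hins]
      exact (w _).2
    · intro i hi
      rw [hcard] at hi
      have : ¬ i < k * M.card := by omega
      simp [extW, this]
    · intro i j l hij hjl hl he
      rw [hcard] at hl
      have hj : j < k * M.card := by omega
      have hi : i < k * M.card := by omega
      rw [extW_lt w hi, extW_lt w hl] at he
      rw [extW_lt w hi, extW_lt w hj]
      exact h2 ⟨i, hi⟩ ⟨j, hj⟩ ⟨l, hl⟩ hij hjl (Subtype.ext he)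
    · rw [extW_lt w hpos]
      exact le_antisymm (h3 hpos r hrM) (hmin _ (w _).2)

theorem extW_inj {k : ℕ} {M : Finset ℕ} {w w' : Fin (k * M.card) → {x // x ∈ M}}
    (h : extW w = extW w') : w = w' := by
  funext i
  have := congrFun h i
  rw [extW_lt w i.2, extW_lt w' i.2] at this
  exact Subtype.ext this

theorem extW_surj {k r : ℕ} {M S : Finset ℕ} (hins : insert r S = M)
    (hcard : S.card + 1 = M.card) {v : ℕ → ℕ} (hv : SW k r S v) :
    ∃ w : Fin (k * M.card) → {x // x ∈ M}, extW w = v := by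
  refine ⟨fun i => ⟨v i, ?_⟩, ?_⟩
  · have h1 := hv.mem i.1 (by rw [hcard]; exact i.2)
    exact hins ▸ h1
  · funext i
    by_cases hi : i < k * M.card
    · rw [extW_lt _ hi]
    · have := hv.out i (by rw [hcard]; omega)
      simp [extW, hi, this]

theorem ap_extW {k : ℕ} {M : Finset ℕ} (w : Fin (k * M.card) → {x // x ∈ M}) :
    apStatOn k M w = apWord k (k * M.card) (extW w) := by
  have e : ∀ q < k * M.card,
      (if h : q < k * M.card then (w ⟨q, h⟩ : ℕ) + 1 else 0) = extW w q + 1 := by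
    intro q hq
    simp [extW, hq]
  change (AP k (k * M.card) _).card = (AP k (k * M.card) _).card
  congr 1
  ext i
  rw [mem_AP, mem_AP]
  apply and_congr_right
  intro hi
  by_cases hk : k = 0
  · subst hk
    simp at hi
  rw [e i (by omega), e (i + 1) (by omega)]
  apply and_congr (by omega)
  apply forall_congr'
  intro q
  apply forall_congr'
  intro hq
  apply forall_congr'
  intro hq'
  rw [e q (by omega)]
  omega

/-- extend a parent function by `none` -/
def extT {k : ℕ} {M : Finset ℕ} (g : {x // x ∈ M} → Option ({x // x ∈ M} × Fin k)) :
    ℕ → Option (ℕ × ℕ) :=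
  fun x => if h : x ∈ M then (g ⟨x, h⟩).map (fun c => (c.1.1, c.2.1)) else none

theorem extT_mem {k : ℕ} {M : Finset ℕ} (g : {x // x ∈ M} → Option ({x // x ∈ M} × Fin k))
    {x : ℕ} (h : x ∈ M) : extT g x = (g ⟨x, h⟩).map (fun c => (c.1.1, c.2.1)) := by
  simp [extT, h]

theorem extT_some {k : ℕ} {M : Finset ℕ} (g : {x // x ∈ M} → Option ({x // x ∈ M} × Fin k))
    (x y s : ℕ) : extT g x = some (y, s) ↔
      ∃ (hx : x ∈ M) (hy : y ∈ M) (hs : s < k), g ⟨x, hx⟩ = some (⟨y, hy⟩, ⟨s, hs⟩) := by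
  by_cases hx : x ∈ M
  · rw [extT_mem g hx, Option.map_eq_some_iff]
    constructor
    · rintro ⟨⟨⟨a, ha⟩, ⟨b, hb⟩⟩, h1, h2⟩
      simp only [Prod.mk.injEq] at h2
      obtain ⟨rfl, rfl⟩ := h2
      exact ⟨hx, ha, hb, h1⟩
    · rintro ⟨_, hy, hs, h⟩
      exact ⟨_, h, rfl⟩
  · simp [extT, hx]

theorem extT_tree {k r : ℕ} {M S : Finset ℕ} (hins : insert r S = M) (hrS : r ∉ S)
    (hmin : ∀ x ∈ M, r ≤ x)
    (g : {x // x ∈ M} → Option ({x // x ∈ M} × Fin k)) :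
    TreeOn k r S (extT g) ↔ IsTree g := by
  have hrM : r ∈ M := by rw [← hins]; simp
  have hSM : ∀ x ∈ S, x ∈ M := by
    intro x hx
    rw [← hins]
    exact Finset.mem_insert_of_mem hx
  constructor
  · intro h
    refine ⟨?_, ⟨r, hrM⟩, ?_, ?_⟩
    · rintro ⟨x, hx⟩ ⟨y, hy⟩ ⟨s, hs⟩ he
      have h1 := (extT_some g x y s).2 ⟨hx, hy, hs, he⟩
      have hxS : x ∈ S := by
        by_contra hc
        rw [h.out x hc] at h1
        cases h1
      obtain ⟨y', s', h2, h3, h4, h5⟩ := h.par x hxS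
      rw [h1] at h2
      injection h2 with h2
      injection h2 with h2
      subst h2
      exact h4
    · have := h.out r hrS
      rw [extT_mem g hrM, Option.map_eq_none_iff] at this
      exact this
    · rintro ⟨x, hx⟩ he
      apply Subtype.ext
      by_contra hne
      have hxS : x ∈ S := by
        rw [← hins] at hx
        exact Finset.mem_of_mem_insert_of_ne hx hne
      obtain ⟨y', s', h2, h3, h4, h5⟩ := h.par x hxS
      rw [extT_mem g hx, he] at h2
      cases h2
  · rintro ⟨h1, ⟨r', hr'⟩, h2, h3⟩
    have hroot : g ⟨r, hrM⟩ = none := by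
      cases hg : g ⟨r, hrM⟩ with
      | none => rfl
      | some c =>
        exfalso
        have h4 : c.1 < ⟨r, hrM⟩ := h1 _ c.1 c.2 hg
        have h5 : c.1.1 < r := h4
        have := hmin _ c.1.2
        omega
    constructor
    · intro x hx
      cases hg : g ⟨x, hSM x hx⟩ with
      | none =>
        exfalso
        have e1 := h3 _ hg
        have e2 := h3 _ hroot
        rw [← e2] at e1
        have e3 : x = r := congrArg Subtype.val e1
        exact hrS (e3 ▸ hx)
      | some c =>
        refine ⟨c.1.1, c.2.1, ?_, ?_, h1 _ c.1 c.2 hg, c.2.2⟩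
        · rw [extT_mem g (hSM x hx), hg]; rfl
        · rw [hins]; exact c.1.2
    · intro x hx
      by_cases hxM : x ∈ M
      · have : x = r := by
          by_contra hne
          rw [← hins] at hxM
          exact hx (Finset.mem_of_mem_insert_of_ne hxM hne)
        subst this
        rw [extT_mem g hxM, hroot]; rfl
      · simp [extT, hxM]

theorem extT_inj {k : ℕ} {M : Finset ℕ} {g g' : {x // x ∈ M} → Option ({x // x ∈ M} × Fin k)}
    (h : extT g = extT g') : g = g' := by
  funext x
  have := congrFun h x.1
  rw [extT_mem g x.2, extT_mem g' x.2] at this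
  refine Option.map_injective ?_ this
  rintro ⟨⟨a, ha⟩, ⟨b, hb⟩⟩ ⟨⟨a', ha'⟩, ⟨b', hb'⟩⟩ he
  simp only [Prod.mk.injEq] at he
  obtain ⟨rfl, rfl⟩ := he
  rfl

theorem extT_surj {k r : ℕ} {M S : Finset ℕ} (hins : insert r S = M)
    {f : ℕ → Option (ℕ × ℕ)} (hf : TreeOn k r S f) :
    ∃ g : {x // x ∈ M} → Option ({x // x ∈ M} × Fin k), extT g = f := by
  have hex : ∀ x : {x // x ∈ M}, ∃ o : Option ({x // x ∈ M} × Fin k),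
      o.map (fun c => (c.1.1, c.2.1)) = f x.1 := by
    intro x
    by_cases hx : x.1 ∈ S
    · obtain ⟨y, s, h1, h2, h3, h4⟩ := hf.par x.1 hx
      rw [hins] at h2
      exact ⟨some (⟨y, h2⟩, ⟨s, h4⟩), by rw [h1]; rfl⟩
    · exact ⟨none, by rw [hf.out _ hx]; rfl⟩
  choose g hg using hex
  refine ⟨g, ?_⟩
  funext x
  by_cases hx : x ∈ M
  · rw [extT_mem g hx]; exact hg ⟨x, hx⟩
  · have hxS : x ∉ S := fun h => hx (by rw [← hins]; exact Finset.mem_insert_of_mem h)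
    rw [hf.out x hxS]
    simp [extT, hx]

theorem lleaf_extT {k r : ℕ} {M S : Finset ℕ} (hins : insert r S = M) (hrS : r ∉ S)
    (hne : S.Nonempty) {g : {x // x ∈ M} → Option ({x // x ∈ M} × Fin k)}
    (h : TreeOn k r S (extT g)) : lleafStat g = (LF S (extT g)).card := by
  unfold lleafStat
  rw [← Finset.card_map (Function.Embedding.subtype _)]
  congr 1
  have hc : ∀ u : {x // x ∈ M}, hasChild g u ↔ ∃ x s, extT g x = some (u.1, s) := by
    intro u
    constructor
    · rintro ⟨x, s, he⟩
      exact ⟨x.1, s.1, (extT_some g _ _ _).2 ⟨x.2, u.2, s.2, he⟩⟩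
    · rintro ⟨x, s, he⟩
      obtain ⟨hx, hu, hs, he⟩ := (extT_some g _ _ _).1 he
      exact ⟨_, _, he⟩
  have hroot : ∃ x s, extT g x = some (r, s) := by
    obtain ⟨y, s, h1, h2, h3, h4⟩ := h.par _ (S.min'_mem hne)
    rcases Finset.mem_insert.1 h2 with h5 | h5
    · subst h5
      exact ⟨_, _, h1⟩
    · have := S.min'_le y h5
      omega
  ext u
  simp only [Finset.mem_map, Finset.mem_filter, Finset.mem_univ, true_and,
    Function.Embedding.coe_subtype, LF]
  constructor
  · rintro ⟨v, hv, rfl⟩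
    rw [hc] at hv
    push Not at hv
    refine ⟨?_, hv⟩
    have h1 : v.1 ∈ insert r S := hins.symm ▸ v.2
    apply Finset.mem_of_mem_insert_of_ne h1
    intro he
    obtain ⟨x, s, h2⟩ := hroot
    rw [← he] at h2
    exact hv x s h2
  · rintro ⟨hu, hv⟩
    refine ⟨⟨u, by rw [← hins]; exact Finset.mem_insert_of_mem hu⟩, ?_, rfl⟩
    rw [hc]
    push Not
    exact hv

/-- For `n = |M| ≥ 2` there is a bijection `χ` between `k`-Stirling permutations on
`M_k` beginning with the smallest element of `M` and increasing pruned even `k`-ary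
trees on `M`, with `ap(π) = lleaf(χ(π))`; moreover `π` starts with `k` equal letters iff
the first `k-1` children of the root of `χ(π)` are leaves. -/
theorem stirling_tree_bijection (k : ℕ) (hk : 1 ≤ k) (M : Finset ℕ)
    (hM : 2 ≤ M.card) (hpos : ∀ x ∈ M, 0 < x) :
    ∃ e : {w : Fin (k * M.card) → {x // x ∈ M} //
        IsKStirlingOn k M w ∧
          ∀ h0 : 0 < k * M.card, ∀ x ∈ M, ((w ⟨0, h0⟩ : ℕ)) ≤ x} ≃
        {f : {x // x ∈ M} → Option ({x // x ∈ M} × Fin k) // IsTree f},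
      ∀ w, apStatOn k M w.1 = lleafStat (e w).1 ∧
        ((∀ i : Fin (k * M.card), (i : ℕ) < k → ∀ h0 : 0 < k * M.card, w.1 i = w.1 ⟨0, h0⟩)
          ↔ (∀ (r x : {x // x ∈ M}) (j : Fin k), (e w).1 r = none →
              (j : ℕ) < k - 1 → (e w).1 x ≠ some (r, j))) := by
  have hMne : M.Nonempty := Finset.card_pos.1 (by omega)
  obtain ⟨r, hr⟩ : ∃ r, r = M.min' hMne := ⟨_, rfl⟩
  have hrM : r ∈ M := by rw [hr]; exact M.min'_mem hMne
  have hmin : ∀ x ∈ M, r ≤ x := by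
    intro x hx
    rw [hr]
    exact M.min'_le x hx
  obtain ⟨S, hS⟩ : ∃ S, S = M.erase r := ⟨_, rfl⟩
  have hrS : r ∉ S := by rw [hS]; simp
  have hins : insert r S = M := by rw [hS]; exact Finset.insert_erase hrM
  have hcard : S.card + 1 = M.card := by
    rw [← hins, Finset.card_insert_of_notMem hrS]
  have hne : S.Nonempty := Finset.card_pos.1 (by omega)
  have hlt : ∀ x ∈ S, r < x := by
    intro x hx
    rw [hS, Finset.mem_erase] at hx
    exact lt_of_le_of_ne (hmin x hx.2) (Ne.symm hx.1)
  have hpos' : 0 < k * M.card := Nat.mul_pos hk (by omega)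
  obtain ⟨e, he⟩ := main_ind k r hk S hlt
  let cW : {w : Fin (k * M.card) → {x // x ∈ M} // IsKStirlingOn k M w ∧
      ∀ h0 : 0 < k * M.card, ∀ x ∈ M, ((w ⟨0, h0⟩ : ℕ)) ≤ x} → {v // SW k r S v} :=
    fun w => ⟨extW w.1, (extW_SW hk hins hcard hmin w.1).2 w.2⟩
  have hcW : Function.Bijective cW := by
    constructor
    · intro w w' h
      exact Subtype.ext (extW_inj (congrArg Subtype.val h))
    · rintro ⟨v, hv⟩
      obtain ⟨w, rfl⟩ := extW_surj hins hcard hv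
      exact ⟨⟨w, (extW_SW hk hins hcard hmin w).1 hv⟩, rfl⟩
  let cT : {f : {x // x ∈ M} → Option ({x // x ∈ M} × Fin k) // IsTree f} →
      {f // TreeOn k r S f} :=
    fun g => ⟨extT g.1, (extT_tree hins hrS hmin g.1).2 g.2⟩
  have hcT : Function.Bijective cT := by
    constructor
    · intro w w' h
      exact Subtype.ext (extT_inj (congrArg Subtype.val h))
    · rintro ⟨f, hf⟩
      obtain ⟨g, rfl⟩ := extT_surj hins hf
      exact ⟨⟨g, (extT_tree hins hrS hmin g).1 hf⟩, rfl⟩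
  refine ⟨((Equiv.ofBijective cW hcW).trans e).trans (Equiv.ofBijective cT hcT).symm, ?_⟩
  intro w
  obtain ⟨g, hg⟩ : ∃ g, g = (((Equiv.ofBijective cW hcW).trans e).trans
    (Equiv.ofBijective cT hcT).symm) w := ⟨_, rfl⟩
  rw [← hg]
  have hcg : cT g = e (cW w) := by
    rw [hg]
    exact (Equiv.ofBijective cT hcT).apply_symm_apply (e (cW w))
  have hcg' : (e (cW w)).1 = extT g.1 := (congrArg Subtype.val hcg).symm
  have hT : TreeOn k r S (extT g.1) := (cT g).2
  have hSWw : SW k r S (extW w.1) := (cW w).2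
  obtain ⟨h1, h2⟩ := he (cW w)
  rw [hcg'] at h1 h2
  constructor
  · rw [ap_extW, lleaf_extT hins hrS hne hT, ← h1, hcard]
  · have hw0 : ∀ h0 : 0 < k * M.card, (w.1 ⟨0, h0⟩ : ℕ) = r := by
      intro h0
      rw [← extW_lt w.1 h0]
      exact hSWw.ini
    have hkL : k ≤ k * M.card := Nat.le_mul_of_pos_right _ (by omega)
    have e1 : FW k r (cW w).1 ↔
        (∀ i : Fin (k * M.card), (i : ℕ) < k → ∀ h0 : 0 < k * M.card,
          w.1 i = w.1 ⟨0, h0⟩) := by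
      change FW k r (extW w.1) ↔ _
      constructor
      · intro h i hi h0
        apply Subtype.ext
        rw [hw0 h0, ← h i hi, extW_lt w.1 i.2]
      · intro h i hi
        rw [extW_lt w.1 (by omega : i < k * M.card), h ⟨i, by omega⟩ hi hpos', hw0]
    rw [← e1, h2]
    constructor
    · rintro h ⟨r', hr'⟩ ⟨x, hx⟩ j hn hj hx'
      have h3 := (extT_some g.1 x r' j.1).2 ⟨hx, hr', j.2, hx'⟩
      have h4 : r' = r := by
        by_contra hne'
        have h5 : r' ∈ S := by
          rw [← hins] at hr'
          exact Finset.mem_of_mem_insert_of_ne hr' hne'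
        obtain ⟨y, s, h6, _⟩ := hT.par r' h5
        rw [extT_mem g.1 hr', hn] at h6
        cases h6
      rw [h4] at h3
      exact h x j.1 hj h3
    · intro h x s hs hx
      obtain ⟨hxM, hrM', hsk, h3⟩ := (extT_some g.1 x r s).1 hx
      refine h ⟨r, hrM'⟩ ⟨x, hxM⟩ ⟨s, hsk⟩ ?_ hs h3
      have := hT.out r hrS
      rwa [extT_mem g.1 hrM', Option.map_eq_none_iff] at this


end
end

section
/- Let a_n^{(k)}(x) + x·b_n^{(k)}(x) be the symmetric decomposition of A_n^{(k)}(x). Then a_n^{(k)}(x) = Σ_{π ∈ Q̄_n(k)} x^{ap(π)} and x·b_n^{(k)}(x) = Σ_{π ∈ Q̂_n(k)} x^{ap(π)}, where Q̄_n(k) is the set of k-Stirling permutations of order n whose first k letters are equal and Q̂_n(k) is its complement in Q_n(k). -/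
open Polynomial
open scoped Classical

noncomputable section

/-- `π ∈ Q̄_n(k)`: the first `k` letters of the `k`-Stirling permutation are equal. -/
def FirstPlateau (k n : ℕ) (w : Fin (k * n) → Fin n) : Prop :=
  ∀ i : Fin (k * n), (i : ℕ) < k → ∀ h0 : 0 < k * n, w i = w ⟨0, h0⟩

/-- Starts of left longest plateaux of the length-`L` word `v`. -/
def Dset (k L : ℕ) (v : ℕ → ℕ) : Finset ℕ :=
  (Finset.range (L + 1)).filter fun i =>
    i + k ≤ L ∧ (i = 0 ∨ v (i - 1) < v i) ∧ ∀ j < k, v (i + j) = v i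

/-- Insert a block of `k` letters `N` at position `p`. -/
def ins (k N p : ℕ) (v : ℕ → ℕ) : ℕ → ℕ :=
  fun i => if i < p then v i else if i < p + k then N else v (i - k)

/-- Index shift. -/
def shf (k p i : ℕ) : ℕ := if i < p then i else i + k

lemma ins_lt {k N p : ℕ} {v : ℕ → ℕ} {i : ℕ} (h : i < p) : ins k N p v i = v i := by
  simp [ins, h]

lemma ins_mid {k N p : ℕ} {v : ℕ → ℕ} {i : ℕ} (h : p ≤ i) (h2 : i < p + k) :
    ins k N p v i = N := by
  simp [ins, h2, not_lt.mpr h]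

lemma ins_ge {k N p : ℕ} {v : ℕ → ℕ} {i : ℕ} (h : p + k ≤ i) :
    ins k N p v i = v (i - k) := by
  have h1 : ¬ i < p := by omega
  have h2 : ¬ i < p + k := by omega
  simp [ins, h1, h2]

lemma ins_shf {k N p : ℕ} {v : ℕ → ℕ} (i : ℕ) : ins k N p v (shf k p i) = v i := by
  unfold shf
  split_ifs with h
  · exact ins_lt h
  · rw [ins_ge (by omega)]; congr 1; omega

lemma shf_inj (k p : ℕ) : Function.Injective (shf k p) := by
  intro a b h
  unfold shf at h
  split_ifs at h <;> omega

lemma mem_Dset {k L : ℕ} {v : ℕ → ℕ} {i : ℕ} : i ∈ Dset k L v ↔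
    i + k ≤ L ∧ (i = 0 ∨ v (i - 1) < v i) ∧ ∀ j < k, v (i + j) = v i := by
  simp only [Dset, Finset.mem_filter, Finset.mem_range]
  constructor
  · exact fun h => h.2
  · exact fun h => ⟨by omega, h⟩

lemma mem_Dset_ins {k L N p : ℕ} {v : ℕ → ℕ} (hk : 1 ≤ k) (hp : p ≤ L)
    (hv : ∀ i < L, v i < N) (i : ℕ) :
    i ∈ Dset k (L + k) (ins k N p v) ↔
      i = p ∨ ∃ i0 ∈ Dset k L v, ¬ (i0 ≤ p ∧ p < i0 + k) ∧ shf k p i0 = i := by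
  constructor
  · intro h
    rw [mem_Dset] at h
    obtain ⟨h1, h2, h3⟩ := h
    rcases lt_trichotomy i p with hip | hip | hip
    · right
      have hb : i + k ≤ p := by
        by_contra hc
        have := h3 (p - i) (by omega)
        rw [ins_mid (by omega) (by omega), ins_lt hip] at this
        have := hv i (by omega)
        omega
      refine ⟨i, ?_, by omega, by simp [shf, hip]⟩
      rw [mem_Dset]
      refine ⟨by omega, ?_, ?_⟩
      · rcases h2 with h2 | h2
        · exact Or.inl h2
        · right
          rwa [ins_lt (by omega), ins_lt hip] at h2
      · intro j hj
        have := h3 j hj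
        rwa [ins_lt (by omega), ins_lt hip] at this
    · exact Or.inl hip
    · right
      rcases h2 with h2 | h2
      · omega
      have hb : p + k < i := by
        by_contra hc
        rw [ins_mid (by omega) (by omega)] at h2
        by_cases hik : i < p + k
        · rw [ins_mid (by omega) (by omega)] at h2
          omega
        · rw [ins_ge (by omega)] at h2
          have := hv (i - k) (by omega)
          omega
      have hs : shf k p (i - k) = i := by
        unfold shf
        rw [if_neg (by omega)]; omega
      refine ⟨i - k, ?_, by omega, hs⟩
      rw [mem_Dset]
      refine ⟨by omega, ?_, ?_⟩
      · right
        rw [ins_ge (by omega), ins_ge (by omega)] at h2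
        rwa [show i - k - 1 = i - 1 - k by omega]
      · intro j hj
        have := h3 j hj
        rw [ins_ge (by omega), ins_ge (by omega)] at this
        rwa [show i - k + j = i + j - k by omega]
  · rintro (rfl | ⟨i0, h0, h1, rfl⟩)
    · rw [mem_Dset]
      refine ⟨by omega, ?_, ?_⟩
      · by_cases h : i = 0
        · exact Or.inl h
        · right
          rw [ins_lt (by omega), ins_mid le_rfl (by omega)]
          exact hv _ (by omega)
      · intro j hj
        rw [ins_mid (by omega) (by omega), ins_mid (by omega) (by omega)]
    · rw [mem_Dset] at h0 ⊢
      obtain ⟨h2, h3, h4⟩ := h0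
      rw [ins_shf]
      by_cases hi : i0 < p
      · have hs : shf k p i0 = i0 := by simp [shf, hi]
        rw [hs]
        refine ⟨by omega, ?_, ?_⟩
        · rwa [ins_lt (by omega)]
        · intro j hj
          rw [ins_lt (by omega)]
          exact h4 j hj
      · have hs : shf k p i0 = i0 + k := by simp [shf, hi]
        rw [hs]
        refine ⟨by omega, ?_, ?_⟩
        · right
          rw [ins_ge (by omega), show i0 + k - 1 - k = i0 - 1 by omega]
          rcases h3 with h3 | h3
          · omega
          · exact h3
        · intro j hj
          rw [ins_ge (by omega), show i0 + k + j - k = i0 + j by omega]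
          exact h4 j hj

lemma Dset_disj {k L : ℕ} {v : ℕ → ℕ} {i i' : ℕ} (h : i ∈ Dset k L v) (h' : i' ∈ Dset k L v)
    (hlt : i < i') : i + k ≤ i' := by
  rw [mem_Dset] at h h'
  by_contra hc
  have e1 := h.2.2 (i' - i) (by omega)
  have e2 := h.2.2 (i' - i - 1) (by omega)
  rw [show i + (i' - i) = i' by omega] at e1
  rw [show i + (i' - i - 1) = i' - 1 by omega] at e2
  rcases h'.2.1 with h3 | h3 <;> omega

lemma sum_cover {R : Type*} [CommRing R] (k L : ℕ) (E : Finset ℕ)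
    (hE : ∀ i ∈ E, i + k ≤ L)
    (hd : ∀ i ∈ E, ∀ i' ∈ E, i < i' → i + k ≤ i') (f : ℕ → R) :
    ∑ p ∈ Finset.range (L + 1),
        f ((E.filter fun i => ¬ (i ≤ p ∧ p < i + k)).card + 1) =
      (k : R) * E.card * f E.card + ((L : R) + 1 - k * E.card) * f (E.card + 1) := by
  set U := E.biUnion (fun i => Finset.Ico i (i + k)) with hU
  have hUc : U.card = k * E.card := by
    rw [hU, Finset.card_biUnion]
    · simp [mul_comm]
    · intro x hx y hy hxy
      rw [Function.onFun, Finset.disjoint_left]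
      intro a ha hb
      simp only [Finset.mem_Ico] at ha hb
      rcases lt_or_gt_of_ne hxy with h | h
      · have := hd x hx y hy h; omega
      · have := hd y hy x hx h; omega
  have hUs : U ⊆ Finset.range (L + 1) := by
    intro a ha
    simp only [hU, Finset.mem_biUnion, Finset.mem_Ico] at ha
    obtain ⟨i, hi, h1, h2⟩ := ha
    have := hE i hi
    simp; omega
  rw [← Finset.sum_sdiff hUs]
  have h1 : ∀ p ∈ U, f ((E.filter fun i => ¬ (i ≤ p ∧ p < i + k)).card + 1) = f E.card := by
    intro p hp
    simp only [hU, Finset.mem_biUnion, Finset.mem_Ico] at hp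
    obtain ⟨i, hi, h1, h2⟩ := hp
    have : E.filter (fun i => ¬ (i ≤ p ∧ p < i + k)) = E.erase i := by
      ext a
      simp only [Finset.mem_filter, Finset.mem_erase]
      constructor
      · rintro ⟨ha, hb⟩
        exact ⟨by rintro rfl; exact hb ⟨h1, h2⟩, ha⟩
      · rintro ⟨ha, hb⟩
        refine ⟨hb, ?_⟩
        rcases lt_or_gt_of_ne ha with h | h
        · have := hd a hb i hi h; omega
        · have := hd i hi a hb h; omega
    rw [this, Finset.card_erase_add_one hi]
  have h2 : ∀ p ∈ Finset.range (L + 1) \ U,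
      f ((E.filter fun i => ¬ (i ≤ p ∧ p < i + k)).card + 1) = f (E.card + 1) := by
    intro p hp
    simp only [hU, Finset.mem_sdiff, Finset.mem_biUnion, Finset.mem_Ico, not_exists, not_and] at hp
    rw [Finset.filter_true_of_mem]
    intro i hi h
    exact hp.2 i hi h.1 h.2
  rw [Finset.sum_congr rfl h1, Finset.sum_congr rfl h2, Finset.sum_const, Finset.sum_const]
  have hc : ((Finset.range (L + 1) \ U).card : R) = (L : R) + 1 - k * E.card := by
    have := Finset.card_sdiff_add_card_eq_card hUs
    rw [hUc, Finset.card_range] at this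
    have h3 := congrArg (Nat.cast : ℕ → R) this
    push_cast at h3
    rw [← h3]; ring
  rw [nsmul_eq_mul, nsmul_eq_mul, hc, hUc]
  push_cast
  ring

/-- Left statistic. -/
def lapc (k L : ℕ) (v : ℕ → ℕ) : ℕ := (Dset k L v).card

/-- Plain statistic. -/
def apc (k L : ℕ) (v : ℕ → ℕ) : ℕ := ((Dset k L v).erase 0).card

lemma lapc_ins {k L N p : ℕ} {v : ℕ → ℕ} (hk : 1 ≤ k) (hp : p ≤ L)
    (hv : ∀ i < L, v i < N) :
    lapc k (L + k) (ins k N p v) =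
      ((Dset k L v).filter fun i => ¬ (i ≤ p ∧ p < i + k)).card + 1 := by
  have : Dset k (L + k) (ins k N p v) =
      insert p (((Dset k L v).filter fun i => ¬ (i ≤ p ∧ p < i + k)).image (shf k p)) := by
    ext i
    rw [mem_Dset_ins hk hp hv]
    simp only [Finset.mem_insert, Finset.mem_image, Finset.mem_filter, and_assoc]
  rw [lapc, this, Finset.card_insert_of_notMem, Finset.card_image_of_injective _ (shf_inj k p)]
  intro h
  simp only [Finset.mem_image] at h
  obtain ⟨a, -, ha⟩ := h
  unfold shf at ha
  split_ifs at ha <;> omega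

lemma apc_ins {k L N p : ℕ} {v : ℕ → ℕ} (hk : 1 ≤ k) (hp : p ≤ L) (hp0 : p ≠ 0)
    (hv : ∀ i < L, v i < N) :
    apc k (L + k) (ins k N p v) =
      (((Dset k L v).erase 0).filter fun i => ¬ (i ≤ p ∧ p < i + k)).card + 1 := by
  have : (Dset k (L + k) (ins k N p v)).erase 0 =
      insert p ((((Dset k L v).erase 0).filter
        fun i => ¬ (i ≤ p ∧ p < i + k)).image (shf k p)) := by
    ext i
    simp only [Finset.mem_erase, mem_Dset_ins hk hp hv, Finset.mem_insert, Finset.mem_image,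
      Finset.mem_filter]
    constructor
    · rintro ⟨h0, h | ⟨a, ha, hb, hc⟩⟩
      · exact Or.inl h
      · refine Or.inr ⟨a, ⟨⟨?_, ha⟩, hb⟩, hc⟩
        rintro rfl
        rw [shf, if_pos (by omega)] at hc
        omega
    · rintro (h | ⟨a, ⟨⟨h0, ha⟩, hb⟩, hc⟩)
      · exact ⟨by omega, Or.inl h⟩
      · refine ⟨?_, Or.inr ⟨a, ha, hb, hc⟩⟩
        unfold shf at hc
        split_ifs at hc <;> omega
  rw [apc, this, Finset.card_insert_of_notMem, Finset.card_image_of_injective _ (shf_inj k p)]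
  intro h
  simp only [Finset.mem_image] at h
  obtain ⟨a, -, ha⟩ := h
  unfold shf at ha
  split_ifs at ha <;> omega

lemma apc_ins_zero {k L N : ℕ} {v : ℕ → ℕ} (hk : 1 ≤ k)
    (hv : ∀ i < L, v i < N) :
    apc k (L + k) (ins k N 0 v) = apc k L v := by
  have : (Dset k (L + k) (ins k N 0 v)).erase 0 =
      ((Dset k L v).erase 0).image (shf k 0) := by
    ext i
    simp only [Finset.mem_erase, mem_Dset_ins hk (Nat.zero_le _) hv, Finset.mem_image]
    constructor
    · rintro ⟨h0, h | ⟨a, ha, hb, hc⟩⟩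
      · omega
      · exact ⟨a, ⟨by omega, ha⟩, hc⟩
    · rintro ⟨a, ⟨h0, ha⟩, hc⟩
      refine ⟨?_, Or.inr ⟨a, ha, by omega, hc⟩⟩
      unfold shf at hc
      split_ifs at hc <;> omega
  rw [apc, this, Finset.card_image_of_injective _ (shf_inj k 0), apc]

lemma sum_lapc {R : Type*} [CommRing R] {k L N : ℕ} {v : ℕ → ℕ} (hk : 1 ≤ k)
    (hv : ∀ i < L, v i < N) (f : ℕ → R) :
    ∑ p ∈ Finset.range (L + 1), f (lapc k (L + k) (ins k N p v)) =
      (k : R) * lapc k L v * f (lapc k L v) +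
        ((L : R) + 1 - k * lapc k L v) * f (lapc k L v + 1) := by
  have := sum_cover k L (Dset k L v) (fun i hi => (mem_Dset.mp hi).1)
    (fun i hi i' hi' h => Dset_disj hi hi' h) f
  rw [lapc, ← this]
  refine Finset.sum_congr rfl fun p hp => ?_
  rw [lapc_ins hk (by simp at hp; omega) hv]

lemma sum_apc {R : Type*} [CommRing R] {k L N : ℕ} {v : ℕ → ℕ} (hk : 1 ≤ k)
    (hv : ∀ i < L, v i < N) (f : ℕ → R) :
    ∑ p ∈ Finset.range (L + 1), f (apc k (L + k) (ins k N p v)) =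
      (1 + (k : R) * apc k L v) * f (apc k L v) +
        ((L : R) - k * apc k L v) * f (apc k L v + 1) := by
  have := sum_cover k L ((Dset k L v).erase 0)
    (fun i hi => (mem_Dset.mp (Finset.mem_of_mem_erase hi)).1)
    (fun i hi i' hi' h => Dset_disj (Finset.mem_of_mem_erase hi) (Finset.mem_of_mem_erase hi') h) f
  rw [Finset.sum_range_succ'] at this ⊢
  rw [apc_ins_zero hk hv]
  have h0 : ((Dset k L v).erase 0).filter (fun i => ¬ (i ≤ 0 ∧ 0 < i + k)) =
      (Dset k L v).erase 0 := by
    apply Finset.filter_true_of_mem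
    intro i hi
    have := Finset.ne_of_mem_erase hi
    omega
  rw [h0] at this
  have h1 : ∑ p ∈ Finset.range L, f (apc k (L + k) (ins k N (p + 1) v)) =
      ∑ p ∈ Finset.range L, f ((((Dset k L v).erase 0).filter
        fun i => ¬ (i ≤ p + 1 ∧ p + 1 < i + k)).card + 1) := by
    refine Finset.sum_congr rfl fun p hp => ?_
    rw [apc_ins hk (by simp at hp; omega) (by omega) hv]
  rw [h1]
  unfold apc
  linear_combination this

/-- Words of `k`-Stirling permutations, built by insertion. -/
def Fam (k : ℕ) : ℕ → Finset (ℕ → ℕ)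
  | 0 => {fun _ => 0}
  | n + 1 => (Fam k n ×ˢ Finset.range (k * n + 1)).image fun q => ins k (n + 1) q.2 q.1

/-- Intrinsic description of the words. -/
def Good (k n : ℕ) (v : ℕ → ℕ) : Prop :=
  (∀ i < k * n, 1 ≤ v i ∧ v i ≤ n) ∧ (∀ i, k * n ≤ i → v i = 0) ∧
  (∀ m, 1 ≤ m → m ≤ n → ((Finset.range (k * n)).filter fun i => v i = m).card = k) ∧
  (∀ i j l, i ≤ j → j ≤ l → l < k * n → v i = v l → v i ≤ v j)

lemma shf_cases (k p i : ℕ) : (p ≤ i ∧ i < p + k) ∨ ∃ a, shf k p a = i := by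
  by_cases h : i < p
  · exact Or.inr ⟨i, by simp [shf, h]⟩
  · by_cases h2 : i < p + k
    · left; omega
    · right
      refine ⟨i - k, ?_⟩
      rw [shf, if_neg (by omega)]; omega

lemma shf_lt {k p L a : ℕ} (hp : p ≤ L) : shf k p a < L + k ↔ a < L := by
  unfold shf; split_ifs <;> omega

lemma shf_le {k p a b : ℕ} : shf k p a ≤ shf k p b ↔ a ≤ b := by
  unfold shf; split_ifs <;> omega

lemma count_ins {k N p L m : ℕ} {v : ℕ → ℕ} (hp : p ≤ L) (hm : m ≠ N) :
    ((Finset.range (L + k)).filter fun i => ins k N p v i = m).card =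
      ((Finset.range L).filter fun i => v i = m).card := by
  rw [← Finset.card_image_of_injective ((Finset.range L).filter fun i => v i = m) (shf_inj k p)]
  congr 1
  ext i
  simp only [Finset.mem_filter, Finset.mem_range, Finset.mem_image]
  constructor
  · rintro ⟨h1, h2⟩
    rcases shf_cases k p i with ⟨h3, h4⟩ | ⟨a, rfl⟩
    · rw [ins_mid h3 h4] at h2; omega
    · rw [ins_shf] at h2
      exact ⟨a, ⟨(shf_lt hp).mp h1, h2⟩, rfl⟩
  · rintro ⟨a, ⟨h1, h2⟩, rfl⟩
    exact ⟨(shf_lt hp).mpr h1, by rwa [ins_shf]⟩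

lemma good_ins {k n p : ℕ} {v : ℕ → ℕ} (h : Good k n v) (hp : p ≤ k * n) :
    Good k (n + 1) (ins k (n + 1) p v) := by
  obtain ⟨h1, h2, h3, h4⟩ := h
  have e : k * (n + 1) = k * n + k := by ring
  refine ⟨?_, ?_, ?_, ?_⟩
  · intro i hi
    rw [e] at hi
    rcases shf_cases k p i with ⟨h5, h6⟩ | ⟨a, rfl⟩
    · rw [ins_mid h5 h6]; omega
    · rw [ins_shf]
      have := h1 a ((shf_lt hp).mp hi)
      omega
  · intro i hi
    rw [e] at hi
    rcases shf_cases k p i with ⟨h5, h6⟩ | ⟨a, rfl⟩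
    · omega
    · rw [ins_shf]
      refine h2 a ?_
      have := (shf_lt (k := k) (a := a) hp)
      omega
  · intro m hm1 hm2
    rw [e]
    by_cases hm : m = n + 1
    · have : ((Finset.range (k * n + k)).filter fun i => ins k (n + 1) p v i = m) =
          Finset.Ico p (p + k) := by
        ext i
        simp only [Finset.mem_filter, Finset.mem_range, Finset.mem_Ico]
        constructor
        · rintro ⟨h5, h6⟩
          rcases shf_cases k p i with h7 | ⟨a, rfl⟩
          · exact h7
          · rw [ins_shf] at h6
            have := h1 a ((shf_lt hp).mp h5)
            omega
        · rintro ⟨h5, h6⟩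
          exact ⟨by omega, by rw [ins_mid h5 h6, hm]⟩
      rw [this]; simp
    · rw [count_ins hp hm]
      exact h3 m hm1 (by omega)
  · intro i j l hij hjl hl he
    rw [e] at hl
    have hb : ∀ i < k * n + k, ins k (n + 1) p v i ≤ n + 1 := by
      intro i hi
      rcases shf_cases k p i with ⟨h5, h6⟩ | ⟨a, rfl⟩
      · rw [ins_mid h5 h6]
      · rw [ins_shf]
        have := h1 a ((shf_lt hp).mp hi)
        omega
    rcases shf_cases k p j with ⟨h5, h6⟩ | ⟨b, rfl⟩
    · rw [ins_mid h5 h6]; exact hb i (by omega)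
    · rcases shf_cases k p i with ⟨h7, h8⟩ | ⟨a, rfl⟩
      · rcases shf_cases k p l with ⟨h9, h10⟩ | ⟨c, rfl⟩
        · rw [ins_mid h7 h8, ins_mid (by omega) (by omega)]
        · rw [ins_mid h7 h8, ins_shf] at he
          have := h1 c ((shf_lt hp).mp hl)
          omega
      · rcases shf_cases k p l with ⟨h9, h10⟩ | ⟨c, rfl⟩
        · rw [ins_shf, ins_mid h9 h10] at he
          have := h1 a ((shf_lt (k := k) hp).mp (by omega))
          omega
        · simp only [ins_shf] at he ⊢
          exact h4 a b c (shf_le.mp hij) (shf_le.mp hjl) ((shf_lt hp).mp hl) he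

lemma good_del {k n : ℕ} {v : ℕ → ℕ} (hk : 1 ≤ k) (h : Good k (n + 1) v) :
    ∃ p u, p ≤ k * n ∧ Good k n u ∧ ins k (n + 1) p u = v := by
  obtain ⟨h1, h2, h3, h4⟩ := h
  have e : k * (n + 1) = k * n + k := by ring
  rw [e] at h1 h2 h3 h4
  set S := (Finset.range (k * n + k)).filter fun i => v i = n + 1 with hS
  have hSc : S.card = k := h3 (n + 1) (by omega) le_rfl
  have hne : S.Nonempty := by
    rw [← Finset.card_pos]; omega
  set p := S.min' hne with hp
  set q := S.max' hne with hq
  have hpS : p ∈ S := S.min'_mem hne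
  have hqS : q ∈ S := S.max'_mem hne
  have hpq : p ≤ q := S.min'_le _ hqS
  have hmem : ∀ i, i ∈ S ↔ i < k * n + k ∧ v i = n + 1 := by
    intro i; simp [hS]
  have hSI : S = Finset.Icc p q := by
    ext i
    rw [Finset.mem_Icc]
    constructor
    · intro hi
      exact ⟨S.min'_le _ hi, S.le_max' _ hi⟩
    · rintro ⟨ha, hb⟩
      rw [hmem] at hpS hqS ⊢
      have := h4 p i q ha hb hqS.1 (by omega)
      have := h1 i (by omega)
      omega
  have hqk : q + 1 = p + k := by
    have := hSc
    rw [hSI, Nat.card_Icc] at this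
    omega
  have hpL : p ≤ k * n := by
    rw [hmem] at hqS; omega
  have hblk : ∀ i, i < k * n + k → (v i = n + 1 ↔ p ≤ i ∧ i < p + k) := by
    intro i hi
    have h5 := hmem i
    rw [hSI, Finset.mem_Icc] at h5
    constructor
    · intro h; have := h5.mpr ⟨hi, h⟩; omega
    · intro h; exact (h5.mp (by omega)).2
  have hins : ins k (n + 1) p (fun a => v (shf k p a)) = v := by
    funext i
    rcases shf_cases k p i with ⟨h5, h6⟩ | ⟨a, rfl⟩
    · rw [ins_mid h5 h6]
      exact ((hblk i (by omega)).mpr ⟨h5, h6⟩).symm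
    · rw [ins_shf]
  refine ⟨p, fun a => v (shf k p a), hpL, ⟨?_, ?_, ?_, ?_⟩, hins⟩
  · intro i hi
    have h5 : shf k p i < k * n + k := (shf_lt hpL).mpr hi
    have h6 := h1 _ h5
    have h7 := hblk _ h5
    have h8 : ¬ (p ≤ shf k p i ∧ shf k p i < p + k) := by
      unfold shf; split_ifs <;> omega
    show 1 ≤ v (shf k p i) ∧ v (shf k p i) ≤ n
    have h9 : v (shf k p i) ≠ n + 1 := fun hh => h8 (h7.mp hh)
    omega
  · intro i hi
    apply h2
    have := (shf_lt (k := k) (a := i) hpL)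
    omega
  · intro m hm1 hm2
    rw [← count_ins (k := k) (N := n + 1) (p := p) hpL (by omega), hins]
    exact h3 m hm1 (by omega)
  · intro i j l hij hjl hl he
    exact h4 _ _ _ (shf_le.mpr hij) (shf_le.mpr hjl) ((shf_lt hpL).mpr hl) he

lemma mem_Fam {k : ℕ} (hk : 1 ≤ k) (n : ℕ) : ∀ v, v ∈ Fam k n ↔ Good k n v := by
  induction n with
  | zero =>
    intro v
    simp only [Fam, Finset.mem_singleton]
    constructor
    · rintro rfl
      exact ⟨by simp, by simp, by intro m h1 h2; omega, by simp⟩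
    · intro h
      funext i
      exact h.2.1 i (by simp)
  | succ n ih =>
    intro v
    simp only [Fam, Finset.mem_image, Finset.mem_product, Finset.mem_range, Prod.exists]
    constructor
    · rintro ⟨u, p, ⟨h1, h2⟩, rfl⟩
      exact good_ins ((ih u).mp h1) (by omega)
    · intro h
      obtain ⟨p, u, h1, h2, h3⟩ := good_del hk h
      exact ⟨u, p, ⟨(ih u).mpr h2, by omega⟩, h3⟩

lemma sum_Fam_succ {R : Type*} [CommRing R] {k : ℕ} (hk : 1 ≤ k) (n : ℕ) (g : (ℕ → ℕ) → R) :
    ∑ v ∈ Fam k (n + 1), g v =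
      ∑ v ∈ Fam k n, ∑ p ∈ Finset.range (k * n + 1), g (ins k (n + 1) p v) := by
  rw [Fam, Finset.sum_image, Finset.sum_product]
  have key : ∀ u p u' p', Good k n u → p ≤ k * n → p' ≤ k * n →
      ins k (n + 1) p u = ins k (n + 1) p' u' → ¬ p < p' → ¬ p' < p → u = u' := by
    intro u p u' p' hu hp hp' h h1 h2
    have : p = p' := by omega
    subst this
    funext i
    have := congrFun h (shf k p i)
    rwa [ins_shf, ins_shf] at this
  have key2 : ∀ u p u' p', Good k n u → p ≤ k * n → p' ≤ k * n →
      ins k (n + 1) p u = ins k (n + 1) p' u' → ¬ p' < p := by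
    intro u p u' p' hu hp hp' h hlt
    have := congrFun h p'
    rw [ins_lt hlt, ins_mid le_rfl (by omega)] at this
    have := hu.1 p' (by omega)
    omega
  rintro ⟨u, p⟩ hx ⟨u', p'⟩ hy h
  simp only [Finset.coe_product, Set.mem_prod, Finset.mem_coe, Finset.mem_range, mem_Fam hk] at hx hy
  simp only at h
  have a1 := key2 u p u' p' hx.1 (by omega) (by omega) h
  have a2 := key2 u' p' u p hy.1 (by omega) (by omega) h.symm
  have a3 := key u p u' p' hx.1 (by omega) (by omega) h a2 a1
  rw [Prod.mk.injEq]
  exact ⟨a3, by omega⟩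

lemma apc_le {k n : ℕ} (hk : 1 ≤ k) (v : ℕ → ℕ) : apc k (k * n) v ≤ n := by
  have : ((Dset k (k * n) v).erase 0).biUnion (fun i => Finset.Ico i (i + k)) ⊆
      Finset.range (k * n) := by
    intro a ha
    simp only [Finset.mem_biUnion, Finset.mem_Ico] at ha
    obtain ⟨i, hi, h1, h2⟩ := ha
    have := (mem_Dset.mp (Finset.mem_of_mem_erase hi)).1
    simp; omega
  have h := Finset.card_le_card this
  rw [Finset.card_biUnion, Finset.card_range] at h
  · simp only [Nat.card_Ico, add_tsub_cancel_left, Finset.sum_const, smul_eq_mul] at h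
    rw [mul_comm] at h
    exact Nat.le_of_mul_le_mul_left h (by omega)
  · intro x hx y hy hxy
    rw [Function.onFun, Finset.disjoint_left]
    intro a ha hb
    simp only [Finset.mem_Ico] at ha hb
    have hx' := Finset.mem_of_mem_erase hx
    have hy' := Finset.mem_of_mem_erase hy
    rcases lt_or_gt_of_ne hxy with h | h
    · have := Dset_disj hx' hy' h; omega
    · have := Dset_disj hy' hx' h; omega

lemma main_sym {R : Type*} [CommRing R] {k : ℕ} (hk : 1 ≤ k) (n : ℕ) : ∀ f : ℕ → R,
    ∑ v ∈ Fam k n, f (lapc k (k * n) v) = ∑ v ∈ Fam k n, f (n - apc k (k * n) v) := by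
  induction n with
  | zero =>
    intro f
    have h : Dset k 0 (fun _ => 0) = ∅ := by
      ext i
      simp only [mem_Dset, Finset.notMem_empty, iff_false]
      omega
    simp [Fam, lapc, apc, h]
  | succ n ih =>
    intro f
    rw [sum_Fam_succ hk, sum_Fam_succ hk, mul_add, mul_one]
    have hb : ∀ v ∈ Fam k n, ∀ i < k * n, v i < n + 1 := by
      intro v hv i hi
      have := ((mem_Fam hk n v).mp hv).1 i hi
      omega
    rw [Finset.sum_congr rfl fun v hv => sum_lapc hk (hb v hv) f,
      Finset.sum_congr rfl fun v hv => sum_apc hk (hb v hv) (fun j => f (n + 1 - j)),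
      ih (fun j => (k : R) * j * f j + (((k * n : ℕ) : R) + 1 - k * j) * f (j + 1))]
    refine Finset.sum_congr rfl fun v hv => ?_
    have hle := apc_le (n := n) hk v
    have e1 : n + 1 - (apc k (k * n) v + 1) = n - apc k (k * n) v := by omega
    have e2 : n + 1 - apc k (k * n) v = n - apc k (k * n) v + 1 := by omega
    simp only [e1, e2]
    rw [Nat.cast_sub hle]
    push_cast
    ring

lemma wordOf_lt {k n : ℕ} (w : Fin (k * n) → Fin n) {i : ℕ} (h : i < k * n) :
    wordOf k n w i = (w ⟨i, h⟩ : ℕ) + 1 := by simp [wordOf, h]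

lemma wordOf_count {k n : ℕ} (w : Fin (k * n) → Fin n) (m : Fin n) :
    ((Finset.range (k * n)).filter fun i => wordOf k n w i = (m : ℕ) + 1).card =
      (Finset.univ.filter fun i => w i = m).card := by
  symm
  rw [← Finset.card_map Fin.valEmbedding]
  congr 1
  ext i
  simp only [Finset.mem_map, Finset.mem_filter, Finset.mem_univ, true_and, Finset.mem_range,
    Fin.valEmbedding_apply]
  constructor
  · rintro ⟨a, rfl, rfl⟩
    exact ⟨a.2, wordOf_lt w a.2⟩
  · rintro ⟨h1, h2⟩
    rw [wordOf_lt w h1] at h2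
    exact ⟨⟨i, h1⟩, Fin.ext (by omega), rfl⟩

lemma good_wordOf {k n : ℕ} (w : Fin (k * n) → Fin n) :
    Good k n (wordOf k n w) ↔ IsKStirling k n w := by
  constructor
  · rintro ⟨h1, h2, h3, h4⟩
    refine ⟨fun m => ?_, fun i j l hij hjl he => ?_⟩
    · rw [← wordOf_count]
      exact h3 _ (by omega) (by omega)
    · have := h4 i j l hij hjl l.2 (by
        rw [wordOf_lt w i.2, wordOf_lt w l.2]
        exact congrArg (fun x : Fin n => (x : ℕ) + 1) he)
      rw [wordOf_lt w i.2, wordOf_lt w j.2] at this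
      rw [Fin.le_def]
      simpa using this
  · rintro ⟨h1, h2⟩
    refine ⟨?_, ?_, ?_, ?_⟩
    · intro i hi
      rw [wordOf_lt w hi]
      have := (w ⟨i, hi⟩).2
      omega
    · intro i hi
      simp [wordOf, not_lt.mpr hi]
    · intro m hm1 hm2
      have := wordOf_count w ⟨m - 1, by omega⟩
      rw [h1] at this
      simpa only [show m - 1 + 1 = m by omega] using this
    · intro i j l hij hjl hl he
      have hi : i < k * n := by omega
      have hj : j < k * n := by omega
      rw [wordOf_lt w hi, wordOf_lt w hl] at he
      rw [wordOf_lt w hi, wordOf_lt w hj]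
      have := h2 ⟨i, hi⟩ ⟨j, hj⟩ ⟨l, hl⟩ hij hjl (Fin.ext (by omega))
      rw [Fin.le_def] at this
      omega

lemma wordOf_inj (k n : ℕ) : Function.Injective (wordOf k n) := by
  intro a b h
  funext i
  have := congrFun h i
  rw [wordOf_lt a i.2, wordOf_lt b i.2] at this
  exact Fin.ext (by simpa using this)

lemma wordOf_surj {k n : ℕ} {v : ℕ → ℕ} (h : Good k n v) : ∃ w, wordOf k n w = v := by
  refine ⟨fun i => ⟨v i - 1, by have := h.1 i i.2; omega⟩, ?_⟩
  funext i
  by_cases hi : i < k * n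
  · rw [wordOf_lt _ hi]
    have := h.1 i hi
    simp only
    omega
  · rw [h.2.1 i (by omega)]
    simp [wordOf, hi]

lemma sum_stirling {R : Type*} [CommRing R] {k n : ℕ} (hk : 1 ≤ k) (g : (ℕ → ℕ) → R) :
    ∑ w : {w : Fin (k * n) → Fin n // IsKStirling k n w}, g (wordOf k n w.1) =
      ∑ v ∈ Fam k n, g v := by
  refine Finset.sum_bij (fun w _ => wordOf k n w.1) ?_ ?_ ?_ ?_
  · intro w _
    rw [mem_Fam hk, good_wordOf]
    exact w.2
  · intro a _ b _ h
    exact Subtype.ext (wordOf_inj k n h)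
  · intro v hv
    rw [mem_Fam hk] at hv
    obtain ⟨w, rfl⟩ := wordOf_surj hv
    exact ⟨⟨w, (good_wordOf w).mp hv⟩, Finset.mem_univ _, rfl⟩
  · intro _ _; rfl

lemma apStat_eq {k n : ℕ} (w : Fin (k * n) → Fin n) :
    apStat k n w = apc k (k * n) (wordOf k n w) := by
  unfold apStat apWord apc
  rw [← Finset.card_image_of_injective _ Nat.succ_injective]
  congr 1
  ext i
  simp only [Finset.mem_image, Finset.mem_filter, Finset.mem_range, Finset.mem_erase, mem_Dset]
  constructor
  · rintro ⟨a, ⟨h1, h2, h3, h4⟩, rfl⟩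
    exact ⟨by simp, by simp; omega, Or.inr (by simpa using h3), h4⟩
  · rintro ⟨h0, h1, h2, h3⟩
    obtain ⟨a, rfl⟩ := Nat.exists_eq_succ_of_ne_zero h0
    simp only [Nat.succ_eq_add_one] at *
    refine ⟨a, ⟨by omega, by omega, ?_, h3⟩, rfl⟩
    rcases h2 with h2 | h2
    · omega
    · simpa using h2

lemma lapc_eq {k n : ℕ} (hn : 1 ≤ n) (hk : 1 ≤ k) (w : Fin (k * n) → Fin n) :
    lapc k (k * n) (wordOf k n w) = apStat k n w + if FirstPlateau k n w then 1 else 0 := by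
  rw [apStat_eq, lapc, apc]
  have hkn : k ≤ k * n := Nat.le_mul_of_pos_right k hn
  have hiff : 0 ∈ Dset k (k * n) (wordOf k n w) ↔ FirstPlateau k n w := by
    rw [mem_Dset]
    constructor
    · rintro ⟨-, -, h⟩ i hi h0
      have := h i hi
      rw [zero_add, wordOf_lt w i.2, wordOf_lt w h0] at this
      exact Fin.ext (by simpa using this)
    · intro h
      refine ⟨by omega, Or.inl rfl, fun j hj => ?_⟩
      rw [zero_add, wordOf_lt w (show j < k * n by omega), wordOf_lt w (show 0 < k * n by omega),
        h ⟨j, by omega⟩ hj (by omega)]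
  split_ifs with h
  · rw [Finset.card_erase_add_one (hiff.mpr h)]
  · rw [Finset.erase_eq_of_notMem (fun hh => h (hiff.mp hh)), add_zero]

/-- Combinatorial interpretation of the symmetric decomposition of
`A_n^{(k)}(x) = Σ_{π ∈ Q_n(k)} x^{ap(π)}` (Ma–Ma–Yeh–Yeh): if
`A_n^{(k)} = a + x·b` with `a` palindromic of degree at most `n-1` and `b` palindromic
of degree at most `n-2`, then `a = Σ_{π ∈ Q̄_n(k)} x^{ap(π)}` and
`x·b = Σ_{π ∈ Q̂_n(k)} x^{ap(π)}`. -/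
theorem symmetric_decomposition_interpretation (n k : ℕ) (hn : 1 ≤ n) (hk : 1 ≤ k)
    (a b : Polynomial ℝ)
    (hdec : (∑ w : {w : Fin (k * n) → Fin n // IsKStirling k n w},
        (X : Polynomial ℝ) ^ apStat k n w.1) = a + X * b)
    (ha1 : a.natDegree ≤ n - 1) (ha2 : a.reflect (n - 1) = a)
    (hb1 : b.natDegree ≤ n - 2) (hb2 : b.reflect (n - 2) = b) :
    a = (∑ w : {w : Fin (k * n) → Fin n // IsKStirling k n w ∧ FirstPlateau k n w},
        (X : Polynomial ℝ) ^ apStat k n w.1) ∧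
    X * b = (∑ w : {w : Fin (k * n) → Fin n // IsKStirling k n w ∧ ¬ FirstPlateau k n w},
        (X : Polynomial ℝ) ^ apStat k n w.1) := by
  set P := (∑ w : {w : Fin (k * n) → Fin n // IsKStirling k n w ∧ FirstPlateau k n w},
        (X : Polynomial ℝ) ^ apStat k n w.1) with hP
  set Q := (∑ w : {w : Fin (k * n) → Fin n // IsKStirling k n w ∧ ¬ FirstPlateau k n w},
        (X : Polynomial ℝ) ^ apStat k n w.1) with hQ
  have conv : ∀ (p : (Fin (k * n) → Fin n) → Prop) [Fintype {w // p w}] [DecidablePred p] (g : (Fin (k * n) → Fin n) → Polynomial ℝ),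
      ∑ w : {w // p w}, g w.1 = ∑ w ∈ Finset.univ.filter p, g w := by
    intro p _ _ g
    exact (Finset.sum_subtype _ (by simp) g).symm
  have split : ∀ g : (Fin (k * n) → Fin n) → Polynomial ℝ,
      ∑ w : {w : Fin (k * n) → Fin n // IsKStirling k n w}, g w.1 =
      ∑ w : {w : Fin (k * n) → Fin n // IsKStirling k n w ∧ FirstPlateau k n w}, g w.1 +
      ∑ w : {w : Fin (k * n) → Fin n // IsKStirling k n w ∧ ¬ FirstPlateau k n w}, g w.1 := by
    intro g
    rw [conv (IsKStirling k n) g, conv (fun w => IsKStirling k n w ∧ FirstPlateau k n w) g,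
      conv (fun w => IsKStirling k n w ∧ ¬ FirstPlateau k n w) g, ← Finset.sum_filter_add_sum_filter_not _ (FirstPlateau k n),
      Finset.filter_filter, Finset.filter_filter]
  have hA : a + X * b = P + Q := by rw [← hdec, split (fun w => (X : Polynomial ℝ) ^ apStat k n w)]
  have hB : ∑ w : {w : Fin (k * n) → Fin n // IsKStirling k n w},
      (X : Polynomial ℝ) ^ lapc k (k * n) (wordOf k n w.1) = X * P + Q := by
    rw [split (fun w => (X : Polynomial ℝ) ^ lapc k (k * n) (wordOf k n w)), hP, hQ,
      Finset.mul_sum]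
    congr 1
    · refine Finset.sum_congr rfl fun w _ => ?_
      rw [lapc_eq hn hk, if_pos w.2.2, pow_succ']
    · refine Finset.sum_congr rfl fun w _ => ?_
      rw [lapc_eq hn hk, if_neg w.2.2, add_zero]
  have hAle : ∀ w : Fin (k * n) → Fin n, apStat k n w ≤ n := by
    intro w; rw [apStat_eq]; exact apc_le hk _
  have hrefl : reflect n (a + X * b) = X * P + Q := by
    rw [← hB, ← hdec, sum_stirling hk (fun v => (X : Polynomial ℝ) ^ lapc k (k * n) v),
      main_sym hk n (fun j => (X : Polynomial ℝ) ^ j),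
      ← sum_stirling hk (fun v => (X : Polynomial ℝ) ^ (n - apc k (k * n) v))]
    have hs : ∀ (s : Finset {w : Fin (k * n) → Fin n // IsKStirling k n w}),
        reflect n (∑ w ∈ s, (X : Polynomial ℝ) ^ apStat k n w.1) =
        ∑ w ∈ s, (X : Polynomial ℝ) ^ (n - apc k (k * n) (wordOf k n w.1)) := by
      intro s
      induction s using Finset.induction_on with
      | empty => simp
      | insert x s hx ih =>
        rw [Finset.sum_insert hx, Finset.sum_insert hx, reflect_add, ih, ← apStat_eq]
        congr 1
        rw [← one_mul ((X : Polynomial ℝ) ^ apStat k n x.1), ← C_1, reflect_C_mul_X_pow,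
          revAt_le (hAle _), C_1, one_mul]
    exact hs _
  have hra : reflect n a = X * a := by
    have := reflect_mul (1 : Polynomial ℝ) a (F := 1) (G := n - 1) (by simp) ha1
    rw [one_mul, show 1 + (n - 1) = n by omega, ha2] at this
    rw [this, ← C_1, reflect_C]; simp
  have hrb : reflect n (X * b) = X * b := by
    by_cases h2 : 2 ≤ n
    · have := reflect_mul (X : Polynomial ℝ) b (F := 2) (G := n - 2)
        (natDegree_X_le.trans (by norm_num)) hb1
      rw [show 2 + (n - 2) = n by omega, hb2] at this
      rw [this]
      congr 1
      have h := reflect_C_mul_X_pow 2 1 (c := (1 : ℝ))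
      rw [revAt_le (by norm_num)] at h
      simpa using h
    · have hn1 : n = 1 := by omega
      subst hn1
      have hz : b = 0 := by
        have hb : b = C (b.coeff 0) := eq_C_of_natDegree_le_zero (by simpa using hb1)
        have ha : a = C (a.coeff 0) := eq_C_of_natDegree_le_zero (by simpa using ha1)
        have hap : ∀ w : Fin (k * 1) → Fin 1, apStat k 1 w = 0 := by
          intro w
          unfold apStat apWord
          rw [Finset.card_eq_zero, Finset.filter_eq_empty_iff]
          intro i _ h
          omega
        have h1 := congrArg (fun q => coeff q 1) hdec
        rw [ha] at h1
        simp only [hap, pow_zero, coeff_add, coeff_X_mul, coeff_C_succ, Finset.sum_const,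
          nsmul_eq_mul, mul_one, coeff_natCast_ite] at h1
        rw [hb]
        simp at h1
        rw [← h1]; simp
      simp [hz]
  rw [reflect_add, hra, hrb] at hrefl
  have hfin : (X - 1 : Polynomial ℝ) * a = (X - 1) * P := by
    linear_combination hrefl - hA
  have hne : (X - 1 : Polynomial ℝ) ≠ 0 := by
    rw [← C_1]; exact X_sub_C_ne_zero 1
  have haP : a = P := mul_left_cancel₀ hne hfin
  refine ⟨haP, ?_⟩
  rw [haP] at hA
  exact add_left_cancel hA

end
end
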